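/- arXiv:1509.08502 — 5 statements merged into one kernel-verified Lean document; each statement's English description precedes it below -/
import Mathlib

section
/- In any implication zroupoid satisfying x'' = x, the identity (0 → x') → (y → x) = y → x holds. -/
theorem stmt1 (A : Type*) (imp : A → A → A) (z : A)
    (hI : ∀ x y w : A, imp (imp x y) w = imp (imp (imp (imp w z) x) (imp (imp y w) z)) z)
    (hI0 : imp (imp z z) z = z)
    (hInv : ∀ x : A, imp (imp x z) z = x) :
    ∀ x y : A, imp (imp z (imp x z)) (imp y x) = imp y x := by
  have h1 : ∀ x, imp (imp z z) x = x := by grind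
  have h2 : ∀ x y, imp (imp (imp x z) (imp z z)) (imp (imp y x) z) = imp (imp y x) z := by grind
  have h3 : ∀ x, imp x (imp (imp z x) z) = imp x z := by grind
  have h4 : ∀ x, imp (imp x (imp z z)) x = x := by grind
  have h5 : ∀ x, imp (imp x z) x = x := by grind
  have h6 : ∀ x y, imp (imp y x) y = imp (imp z x) y := by grind
  grind
end

section
/- In any implication zroupoid satisfying x'' = x, the identity ((x → y) → (y → z))' = (0 → x) → (y → z)' holds. -/
set_option maxHeartbeats 4000000 in
theorem stmt11 (A : Type*) (imp : A → A → A) (z : A)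
    (hI : ∀ x y w : A, imp (imp x y) w = imp (imp (imp (imp w z) x) (imp (imp y w) z)) z)
    (hI0 : imp (imp z z) z = z)
    (hInv : ∀ x : A, imp (imp x z) z = x) :
    ∀ x y w : A, imp (imp (imp x y) (imp y w)) z = imp (imp z x) (imp (imp y w) z) := by
  have hJ : ∀ x y w : A, imp (imp (imp x y) w) z = imp (imp (imp w z) x) (imp (imp y w) z) := by
    intro x y w
    rw [hI x y w, hInv]
  have h1 : ∀ x, imp (imp z z) x = x := by
    intro x
    have := hI x z z
    rw [hI0, hInv, hInv] at this
    exact this.symm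
  -- (x→0')→w
  have h2 : ∀ x w, imp (imp (imp x (imp z z)) w) z = imp (imp (imp w z) x) (imp w z) := by
    intro x w
    rw [hJ, h1]
  have h3 : ∀ b w, imp (imp b w) z = imp (imp (imp w z) (imp z z)) (imp (imp b w) z) := by
    intro b w
    have := hJ (imp z z) b w
    rwa [h1] at this
  have h4 : ∀ x, imp (imp x (imp z z)) x = x := by
    intro x
    have := h3 (imp z z) (imp x z)
    rw [h1, hInv] at this
    exact this.symm
  have h5 : ∀ x, imp (imp (imp x z) x) (imp x z) = imp x z := by
    intro x
    rw [← h2, h4]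
  have h6 : ∀ x, imp x (imp (imp z x) z) = imp x z := by
    intro x
    have := hJ z z x
    rw [h1, hInv] at this
    exact this.symm
  have h7 : ∀ x, imp (imp x z) x = x := by
    intro x
    grind
  have h8 : ∀ y x, imp (imp y x) y = imp (imp z x) y := by
    intro y x
    rw [hI y, hI z, h7, hInv]
  have g1 : ∀ x y, imp (imp x (imp y z)) y = imp (imp x (imp z z)) y := by
    intro x y
    rw [hI x, hI x, h1, h7]
  have g2 : ∀ x, imp x (imp z z) = imp z (imp x z) := by
    intro x
    grind
  have g3 : ∀ x y, imp (imp z (imp x z)) (imp y x) = imp y x := by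
    intro x y
    grind
  have g4 : ∀ x y, imp (imp (imp z x) y) z = imp y (imp (imp x y) z) := by
    intro x y
    grind
  have g5 : ∀ x, imp x (imp x z) = imp x z := by
    intro x
    grind
  have g6 : ∀ x y, imp (imp x y) z = imp (imp (imp y z) (imp x z)) (imp (imp x y) z) := by
    intro x y
    have := hJ (imp x z) x y
    rwa [h7] at this
  have g7 : ∀ x y, imp (imp x y) z = imp (imp (imp y z) (imp x z)) (imp (imp z y) z) := by
    intro x y
    have := hJ (imp x z) z y
    rwa [hInv] at this
  have h9 : ∀ x y, imp x (imp x y) = imp x y := by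
    intro x y
    grind (gen := 10) (ematch := 10) (instances := 3000)
  intro x y w
  rw [hJ, h9, h8]
end

section
/- In any implication zroupoid satisfying x'' = x, the relation R₁ defined by x R₁ y iff (x → y') → x = x and (y → x') → y = y is an equivalence relation. -/
section
variable {A : Type*} (imp : A → A → A) (z : A)
local infix:60 " ⇒ " => imp

/-- Reflexivity and transitivity of the first half of the relation. -/
theorem main_aux
    (hI : ∀ x y w : A, (x ⇒ y) ⇒ w = (((w ⇒ z) ⇒ x) ⇒ ((y ⇒ w) ⇒ z)) ⇒ z)
    (hInv : ∀ x : A, (x ⇒ z) ⇒ z = x) (a b c : A) :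
    (a ⇒ (a ⇒ z)) ⇒ a = a ∧
      ((a ⇒ (b ⇒ z)) ⇒ a = a → (b ⇒ (c ⇒ z)) ⇒ b = b → (a ⇒ (c ⇒ z)) ⇒ a = a) := by
  have e1 (x : A) : (x ⇒ z) ⇒ z = x := by
    grind only [hInv x]
  have e2 (x y w : A) : (((x ⇒ z) ⇒ y) ⇒ ((w ⇒ x) ⇒ z)) ⇒ z = (y ⇒ w) ⇒ x := by
    grind only [hI y w x]
  have e3 (x y : A) : (((z ⇒ z) ⇒ x) ⇒ y) ⇒ z = (x ⇒ y) ⇒ z := by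
    grind only [e1 y, e2 z x y]
  have e4 (x : A) : (z ⇒ z) ⇒ x = x := by
    grind only [e1 ((z ⇒ z) ⇒ x), e3 x z, e1 x]
  have e5 (x y : A) : (x ⇒ ((y ⇒ x) ⇒ z)) ⇒ z = (z ⇒ y) ⇒ x := by
    grind only [e1 x, e2 x z y]
  have e6 (x : A) : (z ⇒ x) ⇒ (z ⇒ z) = x ⇒ (z ⇒ z) := by
    grind only [e5 (z ⇒ z) x, e4 ((x ⇒ (z ⇒ z)) ⇒ z), e1 (x ⇒ (z ⇒ z))]
  have e7 : z ⇒ (z ⇒ z) = z ⇒ z := by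
    grind only [e6 z, e4 (z ⇒ z)]
  have e8 (x : A) : (x ⇒ (x ⇒ z)) ⇒ z = x := by
    grind only [e4 x, e5 x (z ⇒ z)]
  have e9 (x : A) : x ⇒ (x ⇒ z) = x ⇒ z := by
    grind only [e1 (x ⇒ (x ⇒ z)), e8 x]
  have e10 (x : A) : (x ⇒ z) ⇒ x = x := by
    grind only [e1 x, e9 (x ⇒ z)]
  have r : (a ⇒ (a ⇒ z)) ⇒ a = a := by
    grind only [e9 a, e10 a]
  refine ⟨r, fun h1 h3 => ?_⟩
  have e11 : (a ⇒ (b ⇒ z)) ⇒ a = a := by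
    grind only
  have e12 : (b ⇒ (c ⇒ z)) ⇒ b = b := by
    grind only
  have e13 (x : A) : (x ⇒ z) ⇒ (z ⇒ z) = z ⇒ x := by
    grind only [e2 (z ⇒ z) x z, e1 z, e1 (z ⇒ x)]
  have e14 (x : A) : x ⇒ (z ⇒ z) = z ⇒ (x ⇒ z) := by
    grind only [e1 x, e13 (x ⇒ z)]
  have e15 (x : A) : z ⇒ ((z ⇒ x) ⇒ z) = x ⇒ (z ⇒ z) := by
    grind only [e14 (z ⇒ x), e6 x]
  have e16 (x : A) : z ⇒ ((x ⇒ (z ⇒ z)) ⇒ z) = z ⇒ x := by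
    grind only [e14 x, e15 (x ⇒ z), e14 (x ⇒ z), e1 x]
  have e17 (x : A) : z ⇒ (x ⇒ (z ⇒ z)) = x ⇒ (z ⇒ z) := by
    grind only [e1 (x ⇒ (z ⇒ z)), e14 ((x ⇒ (z ⇒ z)) ⇒ z), e15 ((x ⇒ (z ⇒ z)) ⇒ z), e16 x, e15 x]
  have e18 (x : A) : z ⇒ (z ⇒ (x ⇒ z)) = x ⇒ (z ⇒ z) := by
    grind only [e14 x, e17 x]
  have e19 (x : A) : z ⇒ (z ⇒ x) = z ⇒ x := by
    grind only [e1 x, e18 (x ⇒ z), e14 (x ⇒ z)]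
  have e20 (x y : A) : (z ⇒ x) ⇒ y = (y ⇒ x) ⇒ y := by
    grind only [e5 y x, e1 y, e9 (y ⇒ z), e2 y ((y ⇒ z) ⇒ z) x]
  have e21 : (z ⇒ (b ⇒ z)) ⇒ a = a := by
    grind only [e20 (b ⇒ z) a]
  have e22 : (z ⇒ (c ⇒ z)) ⇒ b = b := by
    grind only [e20 (c ⇒ z) b]
  have e23 (x y w : A) : ((x ⇒ z) ⇒ y) ⇒ ((w ⇒ x) ⇒ z) = ((y ⇒ w) ⇒ x) ⇒ z := by
    grind only [e1 (((x ⇒ z) ⇒ y) ⇒ ((w ⇒ x) ⇒ z)), e2 x y w]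
  have e24 (x y : A) : x ⇒ ((y ⇒ x) ⇒ z) = ((z ⇒ y) ⇒ x) ⇒ z := by
    grind only [e1 (x ⇒ ((y ⇒ x) ⇒ z)), e5 x y]
  have e25 (x y : A) : (x ⇒ (z ⇒ z)) ⇒ y = (y ⇒ (x ⇒ z)) ⇒ y := by
    grind only [e14 x, e20 (x ⇒ z) y]
  have e26 (x y : A) : (x ⇒ (z ⇒ y)) ⇒ x = (z ⇒ y) ⇒ x := by
    grind only [e20 (z ⇒ y) x, e19 y]
  have e27 (x y : A) : ((z ⇒ x) ⇒ y) ⇒ z = ((y ⇒ x) ⇒ y) ⇒ z := by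
    grind only [e24 y x, e1 y, e9 (y ⇒ z), e23 y ((y ⇒ z) ⇒ z) x]
  have e28 (x y : A) : (z ⇒ (x ⇒ z)) ⇒ y = (y ⇒ (x ⇒ z)) ⇒ y := by
    grind only [e14 x, e25 x y]
  have e29 (x y : A) : (x ⇒ (z ⇒ z)) ⇒ y = (z ⇒ (x ⇒ z)) ⇒ y := by
    grind only [e25 x y, e20 (x ⇒ z) y]
  have e30 (x y : A) : ((x ⇒ (z ⇒ z)) ⇒ y) ⇒ z = (z ⇒ x) ⇒ (y ⇒ z) := by
    grind only [e23 y x (z ⇒ z), e4 y, e20 x (y ⇒ z)]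
  have e31 (x y : A) : (z ⇒ (x ⇒ z)) ⇒ (y ⇒ x) = y ⇒ x := by
    grind only [e1 (y ⇒ x), e30 (x ⇒ z) ((y ⇒ x) ⇒ z), e23 x (z ⇒ z) y, e4 y]
  have e32 (x y : A) : (x ⇒ (z ⇒ z)) ⇒ (y ⇒ x) = y ⇒ x := by
    grind only [e14 x, e31 x y]
  have e33 (x y : A) : ((x ⇒ (y ⇒ z)) ⇒ y) ⇒ z = (z ⇒ x) ⇒ (y ⇒ z) := by
    grind only [e23 y x (y ⇒ z), e10 y, e20 x (y ⇒ z)]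
  have e34 (x y : A) : ((x ⇒ y) ⇒ x) ⇒ y = x ⇒ y := by
    grind only [e1 (((x ⇒ y) ⇒ x) ⇒ y), e1 (x ⇒ y), e23 y (((x ⇒ y) ⇒ z) ⇒ z) x, e33 (y ⇒ z) ((x ⇒ y) ⇒ z), e31 y x]
  have e35 (x y : A) : ((z ⇒ x) ⇒ y) ⇒ x = y ⇒ x := by
    grind only [e20 x y, e34 y x]
  have e36 (x y : A) : (z ⇒ x) ⇒ (z ⇒ y) = x ⇒ (z ⇒ y) := by
    grind only [e20 x (z ⇒ y), e26 x y, e34 x (z ⇒ y)]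
  have e37 (x y : A) : ((z ⇒ x) ⇒ (y ⇒ z)) ⇒ z = (x ⇒ (z ⇒ z)) ⇒ y := by
    grind only [e30 x y, e1 ((x ⇒ (z ⇒ z)) ⇒ y)]
  have e38 (x y : A) : ((z ⇒ (x ⇒ z)) ⇒ y) ⇒ z = (z ⇒ x) ⇒ (y ⇒ z) := by
    grind only [e14 x, e30 x y]
  have e39 : (z ⇒ b) ⇒ (a ⇒ z) = a ⇒ z := by
    grind only [e38 b a]
  have e40 : (z ⇒ c) ⇒ (b ⇒ z) = b ⇒ z := by
    grind only [e38 c b]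
  have e41 (x y : A) : (z ⇒ (x ⇒ z)) ⇒ (y ⇒ z) = ((z ⇒ x) ⇒ y) ⇒ z := by
    grind only [e4 (x ⇒ z), e30 ((z ⇒ z) ⇒ (x ⇒ z)) y, e25 x (z ⇒ z), e14 (x ⇒ (z ⇒ z)), e16 x]
  have e42 (x y : A) : (x ⇒ (z ⇒ z)) ⇒ (y ⇒ z) = ((z ⇒ x) ⇒ y) ⇒ z := by
    grind only [e17 x, e30 (x ⇒ (z ⇒ z)) y, e29 x (z ⇒ z), e14 (z ⇒ (x ⇒ z)), e15 (x ⇒ z), e14 (x ⇒ z), e1 x]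
  have e43 (x y : A) : (x ⇒ (z ⇒ z)) ⇒ y = (x ⇒ (y ⇒ z)) ⇒ y := by
    grind only [e37 x y, e33 x y, e1 ((x ⇒ (y ⇒ z)) ⇒ y)]
  have e44 (x y : A) : (x ⇒ z) ⇒ ((z ⇒ y) ⇒ x) = (z ⇒ y) ⇒ x := by
    grind only [e1 ((z ⇒ y) ⇒ x), e41 y x, e24 (x ⇒ z) (z ⇒ (y ⇒ z)), e19 (y ⇒ z)]
  have e45 (x y : A) : (((z ⇒ x) ⇒ y) ⇒ z) ⇒ (x ⇒ y) = x ⇒ y := by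
    grind only [e24 y x, e43 y (x ⇒ y), e32 y x]
  have e46 (x y : A) : (((z ⇒ x) ⇒ y) ⇒ z) ⇒ y = (z ⇒ x) ⇒ y := by
    grind only [e42 x y, e43 (x ⇒ (z ⇒ z)) y, e29 x (z ⇒ z), e14 (z ⇒ (x ⇒ z)), e15 (x ⇒ z), e14 (x ⇒ z), e1 x]
  have e47 (x y : A) : (x ⇒ z) ⇒ ((x ⇒ y) ⇒ x) = (z ⇒ y) ⇒ x := by
    grind only [e20 y x, e44 x y]
  have e48 (x y : A) : (z ⇒ ((x ⇒ y) ⇒ z)) ⇒ y = (z ⇒ x) ⇒ y := by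
    grind only [e47 y ((x ⇒ y) ⇒ z), e24 y x, e46 x y, e44 y x]
  have e49 (x y : A) : (x ⇒ (z ⇒ z)) ⇒ (z ⇒ y) = (x ⇒ z) ⇒ (z ⇒ y) := by
    grind only [e14 x, e36 (x ⇒ z) y]
  have e50 (x : A) : ((x ⇒ (z ⇒ b)) ⇒ (a ⇒ z)) ⇒ z = (z ⇒ x) ⇒ a := by
    grind only [e23 (a ⇒ z) x (z ⇒ b), e1 a, e20 x a]
  have e51 (x y : A) : (((z ⇒ x) ⇒ y) ⇒ z) ⇒ (x ⇒ z) = (y ⇒ z) ⇒ (x ⇒ z) := by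
    grind only [e41 x y, e35 (x ⇒ z) (y ⇒ z)]
  have e52 (x y : A) : (x ⇒ z) ⇒ (y ⇒ x) = y ⇒ x := by
    grind only [e1 (y ⇒ x), e51 ((y ⇒ x) ⇒ z) x, e48 y x, e45 y x]
  have e53 (x y : A) : ((z ⇒ x) ⇒ z) ⇒ (z ⇒ y) = (x ⇒ z) ⇒ (z ⇒ y) := by
    grind only [e4 (z ⇒ x), e49 ((z ⇒ z) ⇒ (z ⇒ x)) y, e26 (z ⇒ z) x, e14 (z ⇒ x), e15 x, e49 x y]
  have e54 (x y : A) : ((z ⇒ x) ⇒ z) ⇒ y = (x ⇒ z) ⇒ (z ⇒ y) := by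
    grind only [e1 (((z ⇒ x) ⇒ z) ⇒ y), e23 y (z ⇒ x) z, e53 y x, e27 (z ⇒ x) ((z ⇒ y) ⇒ z), e19 x, e37 x (z ⇒ y), e49 x y]
  have e55 (x y : A) : ((x ⇒ (z ⇒ z)) ⇒ z) ⇒ y = x ⇒ (z ⇒ y) := by
    grind only [e14 x, e54 (x ⇒ z) y, e1 x]
  have e56 (x : A) : (x ⇒ (z ⇒ b)) ⇒ (a ⇒ z) = ((z ⇒ x) ⇒ a) ⇒ z := by
    grind only [e1 ((x ⇒ (z ⇒ b)) ⇒ (a ⇒ z)), e50 x]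
  have e57 (x y : A) : (x ⇒ y) ⇒ ((x ⇒ (z ⇒ z)) ⇒ z) = ((y ⇒ z) ⇒ (x ⇒ z)) ⇒ z := by
    grind only [e1 x, e14 x, e23 (x ⇒ z) y z]
  have e58 : (b ⇒ z) ⇒ ((z ⇒ (c ⇒ z)) ⇒ z) = (b ⇒ ((z ⇒ c) ⇒ z)) ⇒ z := by
    grind only [e14 c, e15 c, e14 (z ⇒ c), e57 (z ⇒ c) (b ⇒ z), e1 b]
  have e59 : ((b ⇒ ((z ⇒ c) ⇒ z)) ⇒ z) ⇒ ((z ⇒ b) ⇒ z) = b ⇒ z := by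
    grind only [e1 b, e14 (b ⇒ z), e57 (b ⇒ z) ((z ⇒ (c ⇒ z)) ⇒ z), e1 (z ⇒ (c ⇒ z))]
  have e60 : (b ⇒ ((z ⇒ c) ⇒ z)) ⇒ (z ⇒ b) = z ⇒ b := by
    grind only [e1 ((b ⇒ ((z ⇒ c) ⇒ z)) ⇒ (z ⇒ b)), e36 (b ⇒ ((z ⇒ c) ⇒ z)) b, e41 (b ⇒ ((z ⇒ c) ⇒ z)) (z ⇒ b), e24 ((z ⇒ b) ⇒ z) ((b ⇒ ((z ⇒ c) ⇒ z)) ⇒ z), e1 b, e54 b b, e52 b z]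
  have e61 (x y w : A) : (x ⇒ y) ⇒ ((w ⇒ (x ⇒ z)) ⇒ z) = ((y ⇒ w) ⇒ (x ⇒ z)) ⇒ z := by
    grind only [e1 x, e23 (x ⇒ z) y w]
  have e62 (x y : A) : (x ⇒ y) ⇒ (z ⇒ x) = y ⇒ (z ⇒ x) := by
    grind only [e1 (x ⇒ y), e54 ((x ⇒ y) ⇒ z) x, e14 (x ⇒ y), e61 z x y, e35 x ((y ⇒ (z ⇒ z)) ⇒ z), e55 y x]
  have e63 : (c ⇒ z) ⇒ (z ⇒ b) = z ⇒ b := by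
    grind only [e19 b, e54 c (z ⇒ b), e62 b ((z ⇒ c) ⇒ z)]
  have e64 : (z ⇒ c) ⇒ (a ⇒ z) = a ⇒ z := by
    grind only [e38 c a, e56 (c ⇒ z)]
  have e65 : (z ⇒ (c ⇒ z)) ⇒ a = a := by
    grind only [e14 c, e37 c a, e1 a]
  have g : (a ⇒ (c ⇒ z)) ⇒ a = a := by
    grind only [e28 c a]
  exact g
end

theorem stmt13 (A : Type*) (imp : A → A → A) (z : A)
    (hI : ∀ x y w : A, imp (imp x y) w = imp (imp (imp (imp w z) x) (imp (imp y w) z)) z)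
    (hI0 : imp (imp z z) z = z)
    (hInv : ∀ x : A, imp (imp x z) z = x) :
    Equivalence (fun x y : A => imp (imp x (imp y z)) x = x ∧ imp (imp y (imp x z)) y = y) := by
  have r (x : A) := (main_aux imp z hI hInv x x x).1
  have t (a b c : A) := (main_aux imp z hI hInv a b c).2
  exact ⟨fun x => ⟨r x, r x⟩, fun h => ⟨h.2, h.1⟩,
    fun h k => ⟨t _ _ _ h.1 k.1, t _ _ _ k.2 h.2⟩⟩
end

section
/- In any implication zroupoid satisfying x'' = x, the relation R₁ defined by x R₁ y iff (x → y') → x = x and (y → x') → y = y is a congruence, i.e., it is an equivalence relation compatible with the operation →: if a R₁ b and c R₁ d then (a → c) R₁ (b → d). -/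
set_option maxHeartbeats 8000000 in
theorem stmt14_aux (A : Type*) (i : A → A → A) (n : A → A) (z : A)
    (hn : ∀ x, i x z = n x) (hinv : ∀ x, n (n x) = x)
    (hI : ∀ x y w : A, i (i x y) w = n (i (i (n w) x) (n (i y w)))) :
    (∀ x, i (n x) x = x) ∧ (∀ y x, i (i y x) y = i (i z x) y) ∧
    (∀ w y x, i (i z (n w)) (i (i z (n y)) x) = i (i z (n (i (i z (n w)) y))) x) ∧
    (∀ y w x, i (i z (n (i y w))) (i (i (i z (n y)) x) w) = i (i (i z (n y)) x) w) ∧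
    (∀ w y x, i (i z (n (i w y))) (i w (i (i z (n y)) x)) = i w (i (i z (n y)) x)) := by
  have e4 : ∀ x : A, (n (n x)) = x := by intro x; grind only [hinv x]
  have e3 : ∀ x : A, (i x z) = (n x) := by intro x; grind only [hn x]
  have e5 : ∀ x y u : A, (n (i (i (n x) y) (n (i u x)))) = (i (i y u) x) := by intro x y u; grind only [hI y u x]
  have e8 : ∀ x y : A, (n (i x (n (i y x)))) = (i (i z y) x) := by intro x y; grind only [e4 x, e3 (n x), e5 x z y]
  have e6 : ∀ x y : A, (n (i (i (n z) x) y)) = (n (i x y)) := by intro x y; grind only [e4 y, e3 y, e5 z x y, e3 (i x y)]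
  have e7 : ∀ x : A, (i (n z) x) = x := by intro x; grind only [e4 (i (n z) x), e3 (i (n z) x), e6 x z, e3 x, e4 x]
  have e9 : ∀ x : A, (i (i z x) (n z)) = (i x (n z)) := by intro x; grind only [e8 (n z) x, e7 (n (i x (n z))), e4 (i x (n z))]
  have e10 : (i z (n z)) = (n z) := by grind only [e9 z, e3 z, e7 (n z)]
  have e11 : ∀ x : A, (i (n x) (n z)) = (i z x) := by intro x; grind only [e3 x, e5 (n z) x z, e4 z, e3 (i z x), e4 (i z x)]
  have e12 : ∀ x : A, (i x (n z)) = (i z (n x)) := by intro x; grind only [e4 x, e11 (n x)]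
  have e13 : ∀ x : A, (i z (n (i z x))) = (i x (n z)) := by intro x; grind only [e12 (i z x), e9 x]
  have e15 : ∀ x : A, (i z (n (i x (n z)))) = (i z x) := by intro x; grind only [e12 x, e13 (n x), e12 (n x), e4 x]
  have e16 : ∀ x : A, (i z (i x (n z))) = (i x (n z)) := by intro x; grind only [e4 (i x (n z)), e12 (n (i x (n z))), e13 (n (i x (n z))), e15 x, e13 x]
  have e17 : ∀ x : A, (i z (i z (n x))) = (i x (n z)) := by intro x; grind only [e12 x, e16 x]
  have e18 : ∀ x : A, (i z (i z x)) = (i z x) := by intro x; grind only [e4 x, e17 (n x), e12 (n x)]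
  have e20 : ∀ x : A, (n (i x (n x))) = x := by intro x; grind only [e7 x, e8 x (n z)]
  have e21 : ∀ x : A, (i x (n x)) = (n x) := by intro x; grind only [e4 (i x (n x)), e20 x]
  have e22 : ∀ x : A, (i (n x) x) = x := by intro x; grind only [e4 x, e21 (n x)]
  have e23 : ∀ x : A, (i (n x) x) = x := by intro x; grind only [e22 x]
  have e27 : ∀ x y : A, (i (i z x) y) = (i (i y x) y) := by intro x y; grind only [e8 y x, e4 y, e21 (n y), e5 y (n (n y)) x]
  have e28 : ∀ x y : A, (i (i x y) x) = (i (i z y) x) := by intro x y; grind only [e27 y x]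
  have e38 : ∀ x y : A, (i (i x y) (n y)) = (n (i (i y x) y)) := by intro x y; grind only [e5 (n y) x y, e20 y, e4 y]
  have e58 : ∀ x y : A, (i (i x (n y)) y) = (n (i (i z x) (n y))) := by intro x y; grind only [e4 y, e38 x (n y), e27 x (n y)]
  have e24 : ∀ x : A, (i (i z (n x)) x) = x := by intro x; grind only [e8 x (n x), e22 x, e21 x, e4 x]
  have e44 : ∀ x y : A, (i (i x (n z)) y) = (i (i y (n x)) y) := by intro x y; grind only [e12 x, e27 (n x) y]
  have e32 : ∀ x : A, (i (i x (n z)) (i z x)) = (i z x) := by intro x; grind only [e13 x, e24 (i z x)]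
  have e45 : ∀ x : A, (i (n x) (i z x)) = (i z x) := by intro x; grind only [e4 x, e24 (n x), e44 x (i z (n (n x))), e32 x]
  have e37 : ∀ x y : A, (n (i (i z x) (n (i y x)))) = (i y x) := by intro x y; grind only [e11 x, e5 x (n z) y, e7 y]
  have e47 : ∀ x y : A, (i (i (i z x) y) x) = (i y x) := by intro x y; grind only [e5 x (i z x) y, e45 x, e37 x y]
  have e49 : ∀ x y : A, (i (i (i x y) x) y) = (i x y) := by intro x y; grind only [e27 y x, e47 y x]
  have e59 : ∀ x y : A, (i (i z (n x)) (i y x)) = (i y x) := by intro x y; grind only [e4 (i (i z (n x)) (i y x)), e4 (i y x), e58 (n x) (n (i y x)), e5 x (n (n (i y x))) y, e49 y x]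
  have e29 : ∀ x : A, (n (i (n x) (n (i x (n z))))) = (n x) := by intro x; grind only [e12 x, e8 (n x) z, e3 z, e7 (n x)]
  have e30 : ∀ x : A, (i (n x) (n (i x (n z)))) = x := by intro x; grind only [e4 (i (n x) (n (i x (n z)))), e29 x, e4 x]
  have e31 : ∀ x : A, (i x (n (i z x))) = (n x) := by intro x; grind only [e4 x, e12 (n x), e30 (n x)]
  have e33 : ∀ x : A, (n (i (n (i z x)) x)) = (n (i z x)) := by intro x; grind only [e4 x, e31 x, e8 (n (i z x)) x, e21 (i z x)]
  have e51 : ∀ x y : A, (i (i x (n (i z y))) y) = (i (n x) y) := by intro x y; grind only [e5 y x (n (i z y)), e33 y, e5 y x z, e3 x]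
  have e65 : ∀ x y : A, (i (n (i (i x (n z)) y)) x) = (i (n y) x) := by intro x y; grind only [e13 x, e51 (i (i z (n (i z x))) y) x, e47 (n (i z x)) y, e51 y x]
  have e70 : ∀ x y : A, (i (n (i (i z (n x)) y)) x) = (i (n y) x) := by intro x y; grind only [e12 x, e65 x y]
  have e66 : ∀ x y : A, (i (n (i x (n (i y (n z))))) y) = (i x y) := by intro x y; grind only [e13 y, e51 (i x (n (i z (n (i z y))))) y, e51 x (n (i z y)), e51 (n x) y, e4 x]
  have e73 : ∀ x y : A, (i (i z (n (i x y))) y) = (i (i z x) y) := by intro x y; grind only [e12 (i x y), e5 (n z) x y, e66 (i (n (n z)) x) y, e4 z]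
  have e36 : ∀ x y : A, (i x (n (i y x))) = (n (i (i z y) x)) := by intro x y; grind only [e4 (i x (n (i y x))), e8 x y]
  have e54 : ∀ x y : A, (i (i z x) (n (i y x))) = (n (i y x)) := by intro x y; grind only [e4 (i (i z x) (n (i y x))), e37 x y]
  have e63 : ∀ x y : A, (i (n (i (i z x) y)) (i x y)) = (i x y) := by intro x y; grind only [e4 (i x y), e36 y x, e38 y (n (i x y)), e27 y (n (i x y)), e54 y x]
  have e74 : ∀ x y : A, (i (n x) (i y x)) = (i y x) := by intro x y; grind only [e70 (i y x) x, e73 y x, e63 y x]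
  have e75 : ∀ x y : A, (i x (i y (n x))) = (i y (n x)) := by intro x y; grind only [e4 x, e74 (n x) y]
  have e77 : ∀ x y : A, (i (n (i x (n (i z (n y))))) y) = (i x y) := by intro x y; grind only [e12 y, e66 x y]
  have e78 : ∀ x y : A, (i (i (n x) (n y)) y) = (i (i y x) y) := by intro x y; grind only [e3 x, e5 (n y) x z, e77 (i (n (n y)) x) y, e4 y]
  have e79 : ∀ x y : A, (i (i x (n y)) y) = (i (i y (n x)) y) := by intro x y; grind only [e4 x, e78 (n x) y]
  have e80 : ∀ x y : A, (i (i z (n x)) y) = (i (i x (n y)) y) := by intro x y; grind only [e27 (n x) y, e79 x y]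
  have e81 : ∀ x y : A, (i (i x (n z)) y) = (i (i x (n y)) y) := by intro x y; grind only [e12 x, e80 x y]
  have e50 : ∀ x y : A, (i (i x (i z y)) x) = (i (i z y) x) := by intro x y; grind only [e27 (i z y) x, e18 y]
  have e55 : ∀ x y : A, (i (i z x) (i z y)) = (i x (i z y)) := by intro x y; grind only [e4 (i (i z x) (i z y)), e36 (i z y) x, e18 y, e37 (i z y) x]
  have e97 : ∀ x y u : A, (i (i x (i y u)) y) = (i (i x (i z u)) y) := by intro x y u; grind only [e5 y x (i y u), e27 u y, e5 y x (i z u)]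
  have e98 : ∀ x y : A, (i z (i x (i z y))) = (i z (i x y)) := by intro x y; grind only [e4 (i x (i z y)), e12 (n (i x (i z y))), e13 (n (i x (i z y))), e12 (i x (i z y)), e97 x (n z) y, e15 (i x (i (n z) y)), e7 y]
  have e99 : ∀ x y : A, (i z (i (i z x) y)) = (i z (i x y)) := by intro x y; grind only [e50 y x, e55 y x, e98 (i (i z y) (i z x)) y, e50 (i z y) x, e55 x y, e98 x y]
  have e127 : ∀ x y : A, (i z (n (i x (i z y)))) = (i z (n (i x y))) := by intro x y; grind only [e12 (i x (i z y)), e97 x (n z) y, e7 y, e12 (i x y)]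
  have e115 : ∀ x y : A, (i (i x (n z)) (i z y)) = (i (n x) (i z y)) := by intro x y; grind only [e12 x, e55 (n x) y]
  have e106 : ∀ x y : A, (i (i x (i y (n z))) x) = (i (i y (n z)) x) := by intro x y; grind only [e27 (i y (n z)) x, e16 y]
  have e110 : ∀ x y : A, (i (i z x) (i y (n z))) = (i x (i y (n z))) := by intro x y; grind only [e4 (i (i z x) (i y (n z))), e36 (i y (n z)) x, e16 y, e37 (i y (n z)) x]
  have e82 : ∀ x y : A, (i (i x (n z)) y) = (i (i x (n y)) y) := by intro x y; grind only [e81 x y]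
  have e68 : ∀ x y : A, (n (i (i x (n y)) y)) = (i (i z x) (n y)) := by intro x y; grind only [e58 x y, e4 (i (i z x) (n y))]
  have e94 : ∀ x y : A, (n (i (i x (n z)) y)) = (i (i z x) (n y)) := by intro x y; grind only [e75 z x, e36 y (i x (n z)), e82 x y, e68 x y, e75 y (i z x)]
  have e129 : ∀ x y : A, (i z (n (i (n x) y))) = (i z (i x (n y))) := by intro x y; grind only [e127 (n x) y, e115 x y, e106 (i z y) x, e127 (i (i z y) (i x (n z))) y, e110 y x, e106 y x, e94 x y, e99 x (n y)]
  have e131 : ∀ x y : A, (i z (i (n x) (n y))) = (i z (n (i x y))) := by intro x y; grind only [e129 (n x) y, e4 x]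
  have e133 : ∀ x y : A, (i z (n (i x (n y)))) = (i z (i (n x) y)) := by intro x y; grind only [e12 (i x (n y)), e13 (i x (n y)), e129 x y, e13 (n (i (n x) y)), e12 (n (i (n x) y)), e4 (i (n x) y)]
  have e160 : ∀ x y u : A, (i (i (n x) y) (n (i u x))) = (n (i (i y u) x)) := by intro x y u; grind only [e4 (i (i (n x) y) (n (i u x))), e5 x y u]
  have e43 : ∀ x y : A, (i (i z (i x y)) x) = (i (i z y) x) := by intro x y; grind only [e4 (i (i z (i x y)) x), e36 x (i x y), e27 y x, e8 x (i z y), e18 y]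
  have e144 : ∀ x y : A, (i (n (i z x)) (i z y)) = (i (n x) (i z y)) := by intro x y; grind only [e7 x, e115 (i z (i (n z) x)) y, e43 (n z) x, e12 (i z x), e13 x, e115 x y]
  have e163 : ∀ x y : A, (n (i (i x y) (n (i x (n z))))) = (i (n y) (n x)) := by intro x y; grind only [e4 x, e12 x, e5 (n x) y z, e3 y]
  have e165 : ∀ x y : A, (i (n (i z x)) y) = (i (n x) (i z y)) := by intro x y; grind only [e4 (i (n (i z x)) y), e3 (i z x), e160 y (i z x) z, e18 y, e4 (i z y), e12 (n (i z y)), e144 y x, e163 (n (i z y)) (i z x), e144 x y]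
  have e128 : ∀ x y : A, (i (n (i x y)) (i z y)) = (i x (i z y)) := by intro x y; grind only [e55 (n (i x y)) y, e127 x y, e73 x (i z y), e55 x y]
  have e130 : ∀ x y : A, (i (n x) (i z (i y x))) = (i z (i y x)) := by intro x y; grind only [e55 (n x) (i y x), e128 (i z (n x)) (i y x), e59 x y, e74 (i y x) z]
  have e166 : ∀ x y : A, (i x (i z y)) = (i z (i x y)) := by intro x y; grind only [e74 (i z y) x, e165 y (i x (i z y)), e98 x y, e130 y x]
  have e112 : ∀ x y : A, (i (i (i z x) y) (i y x)) = (i y (i y x)) := by intro x y; grind only [e43 y x, e47 (i y x) y]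
  have e113 : ∀ x y : A, (i (i z x) (i x y)) = (i x (i x y)) := by intro x y; grind only [e27 x (i x y), e27 y x, e112 y x]
  have e122 : ∀ x y : A, (i (i z (i x y)) (n y)) = (n (i (i y x) y)) := by intro x y; grind only [e27 (i x y) (n y), e74 y x, e38 x y]
  have e85 : ∀ x y : A, (n (i (i x (n y)) x)) = (i (i z y) (n x)) := by intro x y; grind only [e38 (n y) x, e4 x, e78 y (n x), e27 y (n x)]
  have e124 : ∀ x y : A, (i (i z x) (i (i z x) y)) = (i (i z x) y) := by intro x y; grind only [e4 (i (i z x) y), e4 x, e12 (n x), e85 (n (i (i (n x) (n z)) y)) x, e65 (n x) y, e5 y (n x) (i z x), e74 x z]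
  have e125 : ∀ x y : A, (i x (i x (i z y))) = (i x (i z y)) := by intro x y; grind only [e113 x (i z y), e55 x y, e124 x (i z y)]
  have e173 : ∀ x y : A, (i z (i x (i x y))) = (i x (i z y)) := by intro x y; grind only [e112 y x, e166 (i (i z y) x) (i x y), e18 y, e166 x y, e112 (i z y) x, e125 x y]
  have e150 : ∀ x y : A, (i (i x (i z y)) (n (i x y))) = (n (i x y)) := by intro x y; grind only [e128 x y, e27 (i z y) (n (i x y)), e18 y, e54 y x]
  have e174 : ∀ x y : A, (n (i x (i x y))) = (n (i x y)) := by intro x y; grind only [e113 x y, e27 x (i x y), e122 x (i x y), e173 x y, e150 x y]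
  have e175 : ∀ x y : A, (i x (i x y)) = (i x y) := by intro x y; grind only [e4 (i x (i x y)), e174 x y, e4 (i x y)]
  have e200 : ∀ x y : A, (i (n x) (n (i y (n (i z x))))) = (i (n y) x) := by intro x y; grind only [e163 (i y (n (i z x))) x, e51 y x, e12 (i y (n (i z x))), e133 y (i z x), e166 (n y) x, e175 z (i (n y) x), e36 (i (n y) x) z, e3 z, e7 (i (n y) x), e4 (i (n y) x)]
  have e288 : ∀ x y u : A, (n (i (i x y) (n (i u (n x))))) = (i (i y u) (n x)) := by intro x y u; grind only [e4 x, e5 (n x) y u]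
  have e137 : ∀ x y : A, (i z (i x (n (i y (n z))))) = (i z (i x y)) := by intro x y; grind only [e98 x (n (i y (n z))), e15 y, e98 x y]
  have e186 : ∀ x y : A, (i (n x) (i y (n (i x (n z))))) = (i y x) := by intro x y; grind only [e4 (i y (n (i x (n z)))), e163 (n (i y (n (i x (n z))))) x, e66 y x, e12 (n (i y (n (i x (n z))))), e137 y x, e36 (i y x) z, e3 z, e7 (i y x), e4 (i y x)]
  have e187 : ∀ x y : A, (n (i (i x y) (n (i z y)))) = (i x y) := by intro x y; grind only [e4 y, e12 (n y), e186 y x, e163 (n y) (i x (n (i y (n z)))), e66 x y]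
  have e188 : ∀ x y : A, (i (i x y) (n (i z y))) = (n (i x y)) := by intro x y; grind only [e4 (i (i x y) (n (i z y))), e187 x y]
  have e239 : ∀ x y u : A, (n (i (i (i (n x) y) u) x)) = (n (i (i y u) x)) := by intro x y u; grind only [e160 x (i (n x) y) u, e175 (n x) y, e160 x y u]
  have e230 : ∀ x y : A, (i (i x y) (n (i x (n z)))) = (n (i (n y) (n x))) := by intro x y; grind only [e4 x, e12 x, e160 (n x) y z, e3 y]
  have e87 : ∀ x y : A, (n (i (i x y) x)) = (i (i z (n y)) (n x)) := by intro x y; grind only [e78 y x, e68 (n y) x]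
  have e95 : ∀ x y : A, (i (i x (n z)) (n y)) = (n (i (i z x) y)) := by intro x y; grind only [e13 x, e87 y (i z x), e50 y x]
  have e181 : ∀ x y : A, (i (n (i x y)) (n x)) = (i (n y) (n x)) := by intro x y; grind only [e163 x (i x y), e175 x y, e163 x y]
  have e261 : ∀ x y : A, (n (i x (n (i y (n z))))) = (i (n x) (n (i z y))) := by intro x y; grind only [e4 x, e230 (i y (n z)) (n x), e95 y x, e12 (i y (n z)), e133 y z, e3 (n y), e4 y, e181 (i z y) x]
  have e240 : ∀ x y u : A, (i (i (i (n x) y) u) x) = (i (i y u) x) := by intro x y u; grind only [e4 (i (i (i (n x) y) u) x), e239 x y u, e4 (i (i y u) x)]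
  have e161 : ∀ x y : A, (i (n (i (n x) y)) y) = (i (n (i (n y) x)) y) := by intro x y; grind only [e3 x, e160 y x z, e51 (i (n y) x) y]
  have e162 : ∀ x y : A, (i (n (i (n x) (n y))) x) = (i (n (i y x)) x) := by intro x y; grind only [e161 (n y) x, e4 y]
  have e182 : ∀ x y : A, (i (n (i (n x) y)) x) = (i (n y) x) := by intro x y; grind only [e4 x, e181 (n x) y]
  have e184 : ∀ x y : A, (i (n (i x y)) y) = (i x y) := by intro x y; grind only [e162 y x, e182 y (n x), e4 x]
  have e241 : ∀ x y u : A, (i (i x (n (i y u))) u) = (i (i x y) u) := by intro x y u; grind only [e240 u x (n (i y u)), e160 u x y, e184 (i x y) u]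
  have e263 : ∀ x y u : A, (i (i (i (i x (n z)) y) u) x) = (i (i y u) x) := by intro x y u; grind only [e4 (i x (n z)), e66 (i (i (n (n (i x (n z)))) y) u) x, e239 (n (i x (n z))) y u, e261 (i y u) x, e241 (n (i y u)) z x, e3 (n (i y u)), e4 (i y u)]
  have e274 : ∀ x y u : A, (i (i (i (i x (n y)) x) u) y) = (i (i x u) y) := by intro x y u; grind only [e44 y x, e263 y x u]
  have e275 : ∀ x y u : A, (i (i (i z x) y) (i u x)) = (i y (i u x)) := by intro x y u; grind only [e274 (i z x) (i u x) y, e54 x u, e166 (n (i u x)) x, e184 u x, e47 (i u x) y]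
  have e421 : ∀ x y u : A, (i (i x (i y u)) (n (i z u))) = (n (i x (i y u))) := by intro x y u; grind only [e288 (i z u) x (i y u), e188 y u, e4 (i y u), e275 u x y]
  have e204 : ∀ x y u : A, (i (i z (i x y)) u) = (i (i x (i u y)) u) := by intro x y u; grind only [e166 x y, e97 x u y]
  have e370 : ∀ x y u : A, (i (i (i x (i y u)) y) (i x u)) = (i y (i x u)) := by intro x y u; grind only [e204 x u y, e47 (i x u) y]
  have e243 : ∀ x y u : A, (i (i z x) (i y u)) = (i (i u x) (i y u)) := by intro x y u; grind only [e27 x (i y u), e184 y u, e240 (i y u) u x]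
  have e272 : ∀ x y u : A, (i (i x (n z)) (i y (i u x))) = (i y (i u x)) := by intro x y u; grind only [e13 x, e243 (n (i z x)) y (i u x), e188 u x, e74 (i u x) y]
  have e285 : ∀ x y u : A, (i (i z (n x)) (i y (i u x))) = (i y (i u x)) := by intro x y u; grind only [e12 x, e272 x y u]
  have e371 : ∀ x y u : A, (i (n x) (i y (i u x))) = (i y (i u x)) := by intro x y u; grind only [e370 y (n x) (i u x), e74 x u, e27 (n x) (i y (i u x)), e285 x y u]
  have e422 : ∀ x y u : A, (i (n (i x (i y u))) u) = (i x (i y u)) := by intro x y u; grind only [e200 u (i x (i y u)), e421 x y u, e4 (i x (i y u)), e371 u x y]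
  have e426 : ∀ x y u : A, (i (i z (n x)) (i y u)) = (i (i (i z x) y) u) := by intro x y u; grind only [e27 (n x) (i y u), e422 (i (i y u) (n x)) y u, e44 x (i y u), e94 x (i y u), e241 (i z x) y u]
  have e88 : ∀ x y : A, (n (i (i z (n x)) y)) = (i (i z x) (n y)) := by intro x y; grind only [e43 y (n x), e36 y (i y (n x)), e79 x y, e68 x y, e75 y (i z x)]
  have e427 : ∀ x y u : A, (i (i z (n x)) (i (i z (n y)) u)) = (i (i z (n (i (i z (n x)) y))) u) := by intro x y u; grind only [e426 x (i z (n y)) u, e166 (i z x) (n y), e99 x (n y), e88 x y]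
  have e266 : ∀ x y u : A, (i (i z (n x)) (i y u)) = (i (i x y) (i y u)) := by intro x y u; grind only [e80 x (i y u), e175 y u, e241 x y (i y u)]
  have e423 : ∀ x y u : A, (i (i (i z x) y) u) = (i (i x y) (i y u)) := by intro x y u; grind only [e241 (i z x) y u, e88 x (i y u), e266 x y u, e422 (i x y) y u]
  have e278 : ∀ x y u : A, (i (i (n x) y) (i y u)) = (i (i z x) (i y u)) := by intro x y u; grind only [e266 (n x) y u, e4 x]
  have e170 : ∀ x y : A, (i (n (i z x)) y) = (i z (i (n x) y)) := by intro x y; grind only [e165 x y, e166 (n x) y]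
  have e195 : ∀ x y : A, (i (n (i x y)) (n (i y (n z)))) = (i x y) := by intro x y; grind only [e13 y, e188 x y, e188 (i x y) (n (i z y)), e4 (i x y)]
  have e199 : ∀ x y : A, (i (n (i x y)) (n (i z (n y)))) = (i x y) := by intro x y; grind only [e12 y, e195 x y]
  have e382 : ∀ x y u : A, (i (i z (i x y)) (i u x)) = (i (i z y) (i u x)) := by intro x y u; grind only [e4 x, e170 (n x) y, e240 (i u x) (n (i z (n x))) y, e199 u x, e27 y (i u x)]
  have e428 : ∀ x y u : A, (i (i z (n (i x y))) (i (i (i z (n x)) u) y)) = (i (i (i z (n x)) u) y) := by intro x y u; grind only [e423 (n x) u y, e278 x u y, e426 (i x y) (i z x) (i u y), e166 (i z (i x y)) x, e43 x y, e99 y x, e382 y x u]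
  have e326 : ∀ x y u : A, (i (i x y) (n (i u y))) = (n (i (i (i x y) u) y)) := by intro x y u; grind only [e74 y x, e160 y (i x y) u]
  have e194 : ∀ x y : A, (i (n (i (n x) (n y))) (i y x)) = (i y x) := by intro x y; grind only [e181 y x, e161 (n y) (i y x), e4 y, e175 y x, e22 (i y x)]
  have e177 : ∀ x y : A, (i (i z x) (i x y)) = (i x y) := by intro x y; grind only [e113 x y, e175 x y]
  have e193 : ∀ x y : A, (i (i x (n z)) (i (n x) y)) = (i (n x) y) := by intro x y; grind only [e12 x, e177 (n x) y]
  have e251 : ∀ x y : A, (i (n (i (n x) y)) (n (i x (n z)))) = (i (n y) x) := by intro x y; grind only [e163 (i x (n z)) (i (n x) y), e193 x y, e12 (i x (n z)), e133 x z, e3 (n x), e4 x, e160 x y z, e3 y, e4 (i (n y) x)]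
  have e247 : ∀ x y : A, (i (n (i x y)) (i (n y) (n x))) = (i (n y) (n x)) := by intro x y; grind only [e181 x y, e175 (n (i x y)) (n x)]
  have e396 : ∀ x y : A, (i (n (i x y)) (n (i z (i y x)))) = (i (n y) (n x)) := by intro x y; grind only [e4 x, e129 y (n x), e12 (i (n y) (n x)), e194 y x, e251 (i (n y) (n x)) (i x y), e247 x y]
  have e477 : ∀ x y : A, (i (n (i x y)) (n (i y (i z x)))) = (i (n y) (n x)) := by intro x y; grind only [e166 y x, e396 x y]
  have e206 : ∀ x y u : A, (i x (i y (i z u))) = (i z (i x (i y u))) := by intro x y u; grind only [e166 y u, e166 x (i y u)]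
  have e92 : ∀ x y : A, (n (i (i z x) (n y))) = (i (i z (n x)) y) := by intro x y; grind only [e58 x y, e80 x y]
  have e294 : ∀ x y u : A, (i z (i (i x (n y)) (i u x))) = (i z (i (i y (i z u)) x)) := by intro x y u; grind only [e99 (i x (n y)) (i u x), e206 (i z (i x (n y))) u x, e129 x y, e92 (i (n x) y) (i u (i z x)), e170 x y, e55 u x, e5 (i z x) y (i z u), e166 (i y (i z u)) x]
  have e307 : ∀ x y u : A, (i z (i (i x (i z y)) u)) = (i z (i (i x y) u)) := by intro x y u; grind only [e99 (i x (i z y)) u, e98 x y, e99 (i x y) u]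
  have e308 : ∀ x y u : A, (i z (i (i x (n y)) (i u x))) = (i z (i (i y u) x)) := by intro x y u; grind only [e294 x y u, e307 y u x]
  have e309 : ∀ x y u : A, (i z (i (n x) (i y u))) = (i z (i (i x y) u)) := by intro x y u; grind only [e175 z (i (n x) (i y u)), e275 u (n x) y, e166 (i (i z u) (n x)) (i y u), e166 y u, e308 (i z u) x y, e166 (i x y) u, e175 z (i (i x y) u)]
  have e310 : ∀ x y u : A, (i z (i (i (n x) y) u)) = (i z (i x (i y u))) := by intro x y u; grind only [e309 (n x) y u, e4 x]
  have e276 : ∀ x y u : A, (i (i (i x y) x) (i u y)) = (i x (i u y)) := by intro x y u; grind only [e27 y x, e275 y x u]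
  have e383 : ∀ x y u : A, (i (i z (n x)) (i y u)) = (i (i x (n u)) (i y u)) := by intro x y u; grind only [e80 x (i y u), e74 u y, e241 x (n u) (i y u)]
  have e119 : ∀ x y : A, (i (n (i x (n (i z y)))) (n y)) = (i x (n y)) := by intro x y; grind only [e3 y, e4 (i z y), e3 (i z y), e38 y z, e66 x (i y z)]
  have e149 : ∀ x y : A, (i z (i x (n (i z y)))) = (i z (i x (n y))) := by intro x y; grind only [e99 x (n (i z y)), e88 x (i z y), e127 (i z (n x)) y, e88 x y, e99 x (n y)]
  have e164 : ∀ x y : A, (i x (i y (n (i z x)))) = (i y (n x)) := by intro x y; grind only [e4 (i y (n (i z x))), e4 x, e163 (n (i y (n (i z x)))) (n x), e119 y x, e12 (n (i y (n (i z x)))), e149 y x, e36 (i y (n x)) z, e3 z, e7 (i y (n x)), e4 (i y (n x))]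
  have e69 : ∀ x y : A, (i (n (i (i x y) x)) (i y x)) = (i y x) := by intro x y; grind only [e27 y x, e63 y x]
  have e101 : ∀ x y : A, (i z (i (i x y) x)) = (i z (i y x)) := by intro x y; grind only [e27 y x, e99 y x]
  have e189 : ∀ x y : A, (i (n (i x y)) (i (i y x) y)) = (i x y) := by intro x y; grind only [e4 (i (i y x) y), e163 (n (i (i y x) y)) (i x y), e69 y x, e12 (n (i (i y x) y)), e101 y x, e36 (i x y) z, e3 z, e7 (i x y), e4 (i x y)]
  have e142 : ∀ x y : A, (i (i z (i x y)) (i y x)) = (i y (i y x)) := by intro x y; grind only [e99 x y, e47 x y, e113 (i (i z x) y) x, e112 x y]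
  have e178 : ∀ x y : A, (i (i z (i x y)) (i y x)) = (i y x) := by intro x y; grind only [e142 x y, e175 y x]
  have e190 : ∀ x y : A, (i (i x y) (i y x)) = (i y x) := by intro x y; grind only [e189 x y, e97 (n (i x y)) (i y x) y, e166 (n (i x y)) y, e184 x y, e178 x y]
  have e196 : ∀ x y : A, (i (i (n x) y) (i x (n y))) = (i x (n y)) := by intro x y; grind only [e164 y x, e51 x y, e190 (i x (n (i z y))) y]
  have e214 : ∀ x y : A, (i (i x y) (i (n x) (n y))) = (i (n x) (n y)) := by intro x y; grind only [e4 x, e196 (n x) y]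
  have e392 : ∀ x y u : A, (i (i (n x) (n y)) (i u (i x y))) = (i u (i x y)) := by intro x y u; grind only [e214 x y, e243 (i (n x) (n y)) u (i x y), e131 x y, e59 (i x y) u]
  have e393 : ∀ x y u : A, (i (i z x) (i y (i x u))) = (i y (i x u)) := by intro x y u; grind only [e4 x, e383 (n x) y (i x u), e175 x u, e392 x (i x u) y]
  have e412 : ∀ x y u : A, (i x (i y (i x u))) = (i y (i x u)) := by intro x y u; grind only [e276 x (i x u) y, e175 x u, e243 x y (i x u), e393 x y u]
  have e630 : ∀ x y u : A, (i (n x) (n (i (i (n x) y) u))) = (i (n x) (n (i y u))) := by intro x y u; grind only [e477 (i (i (n x) y) u) x, e240 x y u, e310 x y u, e412 x z (i y u), e396 (i y u) x]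
  have e631 : ∀ x y u : A, (i x (n (i (i x y) u))) = (i x (n (i y u))) := by intro x y u; grind only [e4 x, e630 (n x) y u]
  have e633 : ∀ x y u : A, (i x (i (i (i x y) u) y)) = (i x (i (i z u) y)) := by intro x y u; grind only [e4 (i (i (i x y) u) y), e326 x y u, e631 x y (n (i u y)), e36 y u, e4 (i (i z u) y)]
  have e442 : ∀ x y u : A, (i z (i x (n (i y u)))) = (i z (n (i (i x y) u))) := by intro x y u; grind only [e129 x (i y u), e12 (i (n x) (i y u)), e13 (i (n x) (i y u)), e309 x y u, e13 (i (i x y) u), e12 (i (i x y) u)]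
  have e90 : ∀ x y : A, (i (i z (n x)) (n y)) = (n (i (i z x) y)) := by intro x y; grind only [e27 (n x) (n y), e75 y (i (n y) (n x)), e79 x (n y), e4 y, e38 x y, e36 y (i y x), e43 y x]
  have e138 : ∀ x y : A, (i z (n (i (i z x) y))) = (i z (n (i x y))) := by intro x y; grind only [e12 (i (i z x) y), e13 (i (i z x) y), e99 x y, e13 (i x y), e12 (i x y)]
  have e118 : ∀ x y : A, (i (n (i (i z x) y)) (n x)) = (i (n y) (n x)) := by intro x y; grind only [e3 x, e4 (i z x), e3 (i z x), e38 x z, e65 (i x z) y]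
  have e491 : ∀ x y u : A, (i (n (i (i z x) y)) u) = (i (i z x) (i (n y) u)) := by intro x y u; grind only [e43 y x, e90 (i y x) y, e138 y x, e423 (n (i (i z y) x)) (n y) u, e118 y x, e278 x (n y) u]
  have e271 : ∀ x y u : A, (i (i x (n (i (n y) u))) y) = (i (i x (n u)) y) := by intro x y u; grind only [e241 x (n (i (n y) u)) y, e182 y u, e241 x (n u) y]
  have e548 : ∀ x y u : A, (i (n (i (i x (n y)) u)) y) = (i (i (i z x) (n u)) y) := by intro x y u; grind only [e160 u x (n y), e271 (i (n u) x) y u, e27 x (n u)]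
  have e549 : ∀ x y u : A, (i (n (i (n x) y)) (i u x)) = (i (n y) (i u x)) := by intro x y u; grind only [e393 u (n (i (n x) y)) x, e491 u (i (n x) y) (i u x), e491 u x y, e36 x u, e548 x (i u x) y, e275 x (n y) u]
  have e260 : ∀ x y : A, (n (i x (n (i z (n y))))) = (i (n x) (n (i z y))) := by intro x y; grind only [e4 x, e230 (i z (n y)) (n x), e90 y x, e12 (i z (n y)), e13 (n y), e12 (n y), e4 y, e181 (i z y) x]
  have e111 : ∀ x y u : A, (i (i x (i (i z y) u)) y) = (i (i x u) y) := by intro x y u; grind only [e5 y x (i (i z y) u), e47 y u, e5 y x u]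
  have e488 : ∀ x y u : A, (i (i x (n (i z y))) (i u y)) = (i (n x) (i u y)) := by intro x y u; grind only [e111 x (i u y) (n (i z y)), e421 z u y, e241 x z (i u y), e3 x]
  have e550 : ∀ x y u : A, (i (n (i x y)) (i u y)) = (i x (i u y)) := by intro x y u; grind only [e4 y, e164 (n y) x, e549 y (i x (n (i z (n y)))) u, e260 x y, e488 (n x) y u, e4 x]
  have e489 : ∀ x y u : A, (i (i x (i y u)) (n u)) = (i u (n (i x (i y u)))) := by intro x y u; grind only [e164 u (i x (i y u)), e421 x y u]
  have e213 : ∀ x y : A, (i (n (i x (n y))) (n (i z y))) = (i x (n y)) := by intro x y; grind only [e4 (i z y), e3 (i z y), e3 y, e38 y z, e195 x (i y z)]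
  have e242 : ∀ x y u : A, (i (i (i x y) u) (n x)) = (i (i y u) (n x)) := by intro x y u; grind only [e4 x, e213 (i (i (n (n x)) y) u) x, e239 (n x) y u, e213 (i y u) x]
  have e390 : ∀ x y u : A, (i (i x (n z)) (i y u)) = (i (i u (n x)) (i y u)) := by intro x y u; grind only [e12 x, e243 (n x) y u]
  have e279 : ∀ x y u : A, (i (i x (n z)) (i y u)) = (i (i x y) (i y u)) := by intro x y u; grind only [e12 x, e266 x y u]
  have e418 : ∀ x y u : A, (i (i x (n z)) (i y u)) = (i (i x (n u)) (i y u)) := by intro x y u; grind only [e74 u y, e279 x (n u) (i y u)]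
  have e430 : ∀ x y u : A, (i (i x (n y)) (i u y)) = (i (i (i z x) u) y) := by intro x y u; grind only [e383 x u y, e426 x u y]
  have e431 : ∀ x y u : A, (i (i x (n z)) (i y u)) = (i (i (i z x) y) u) := by intro x y u; grind only [e418 x y u, e430 x u y]
  have e432 : ∀ x y u : A, (i (i x (n y)) (i u x)) = (i (i (i z y) u) x) := by intro x y u; grind only [e390 y u x, e431 y u x]
  have e305 : ∀ x y u : A, (i (i x (i (i z y) u)) x) = (i (i z (i y u)) x) := by intro x y u; grind only [e27 (i (i z y) u) x, e99 y u]
  have e612 : ∀ x y u : A, (i x (n (i (n y) (i u x)))) = (n (i (i z (i y u)) x)) := by intro x y u; grind only [e489 (n y) u x, e242 x (n y) (i u x), e432 x y u, e38 (i (i z y) u) x, e305 x y u]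
  have e151 : ∀ x y : A, (i x (i z (n (i y x)))) = (i z (n (i y x))) := by intro x y; grind only [e55 x (n (i y x)), e128 (i z x) (n (i y x)), e54 x y, e4 (i y x), e75 (i y x) z]
  have e479 : ∀ x y u : A, (i (n x) (n (i y (n (i u x))))) = (i (i y u) x) := by intro x y u; grind only [e477 (i y (n (i u x))) x, e241 y u x, e442 y u x, e151 x (i y u), e36 (n (i (i y u) x)) z, e3 z, e7 (n (i (i y u) x)), e4 (i (i y u) x)]
  have e613 : ∀ x y u : A, (i x (i (i z (i y x)) u)) = (i (i (i z y) x) u) := by intro x y u; grind only [e550 x u (i z (i y x)), e4 (i (i z (i y x)) u), e612 u y x, e479 (i x u) u (n y), e432 u y x]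
  have e634 : ∀ x y u : A, (i x (i (i y x) u)) = (i (i (i z y) x) u) := by intro x y u; grind only [e241 y x u, e75 (i x u) y, e633 x u (i y (n (i x u))), e442 y x u, e241 z (i y x) u, e613 x y u]
  have e424 : ∀ x y u : A, (i (i (i x y) x) u) = (i (i y x) (i x u)) := by intro x y u; grind only [e27 y x, e423 y x u]
  have e313 : ∀ x y u : A, (i z (i (i (i x y) x) u)) = (i z (i (i y x) u)) := by intro x y u; grind only [e166 (i (i x y) x) u, e55 (i (i x y) x) u, e101 x y, e166 (i z (i y x)) u, e99 (i y x) u]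
  have e425 : ∀ x y u : A, (i z (i (i x y) (i y u))) = (i z (i (i x y) u)) := by intro x y u; grind only [e424 y x u, e313 y x u]
  have e551 : ∀ x y u : A, (i (n (i x y)) (i (n y) u)) = (i (n (i x y)) u) := by intro x y u; grind only [e4 (i (n y) u), e477 (n (i (n y) u)) (i x y), e549 y u x, e129 y u, e166 (i x y) (i y (n u)), e425 x y (n u), e396 (n u) (i x y), e4 u]
  have e661 : ∀ x y u : A, (i (n (i x y)) (i u (n (i z (n y))))) = (i x (i u y)) := by intro x y u; grind only [e551 x y (i u (n (i z (n y)))), e164 (n y) u, e4 y, e550 x y u]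
  have e338 : ∀ x y : A, (n (i (i (n x) (n y)) (n (i z (i y x))))) = (i y x) := by intro x y; grind only [e4 (i y x), e12 (n (i y x)), e181 y x, e163 (n (i y x)) (n y), e4 y, e175 y x]
  have e311 : ∀ x y u : A, (i z (i x (i (i z y) u))) = (i z (i x (i y u))) := by intro x y u; grind only [e98 x (i (i z y) u), e99 y u, e98 x (i y u)]
  have e339 : ∀ x y : A, (i x (i (i z x) y)) = (i x y) := by intro x y; grind only [e338 (i (i z x) y) x, e118 x y, e311 x x y, e175 x y, e338 y x]
  have e662 : ∀ x y u : A, (i x (i y (i (i z x) u))) = (i y (i x u)) := by intro x y u; grind only [e661 x (i (i z x) u) y, e339 x u, e631 z x u, e164 (n (i x u)) y, e4 (i x u)]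
  have e434 : ∀ x y u : A, (i (i (i x (n z)) y) u) = (i (i z x) (i y u)) := by intro x y u; grind only [e12 x, e423 (n x) y u, e278 x y u]
  have e169 : ∀ x y : A, (i z (i (i x (n z)) y)) = (i z (i (n x) y)) := by intro x y; grind only [e166 (i x (n z)) y, e115 x y, e166 (n x) y]
  have e618 : ∀ x y u : A, (i (i z x) (i (i z y) u)) = (i (i z (i (n x) y)) u) := by intro x y u; grind only [e434 x (i z y) u, e166 (i x (n z)) y, e169 x y]
  have e680 : ∀ x y u : A, (i x (i (i z (i (n x) y)) u)) = (i x (i (i z y) u)) := by intro x y u; grind only [e618 x y u, e339 x (i (i z y) u)]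
  have e250 : ∀ x y : A, (i (i x (n y)) (n (i y (n z)))) = (n (i x (n y))) := by intro x y; grind only [e12 y, e188 x (n y)]
  have e395 : ∀ x y u : A, (i (i z x) (i y (i u (n x)))) = (i y (i u (n x))) := by intro x y u; grind only [e4 x, e3 (n x), e133 x z, e243 (n (i x (n z))) y (i u (n x)), e250 u x, e74 (i u (n x)) y]
  have e373 : ∀ x y u : A, (i (i z (i x (i y u))) y) = (i (i z (i x u)) y) := by intro x y u; grind only [e241 z (i x (i y u)) y, e204 x u y, e73 (i z (i x u)) y, e175 z (i x u)]
  have e495 : ∀ x y u : A, (i (i (i z (i x y)) u) y) = (i (i z x) (i u y)) := by intro x y u; grind only [e373 x u y, e426 (i x (i u y)) u y, e241 z x (i u y)]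
  have e209 : ∀ x y : A, (i (n (i x y)) (n (i z x))) = (i (n y) (n x)) := by intro x y; grind only [e163 (i z x) (i x y), e177 x y, e12 (i z x), e13 x, e163 x y]
  have e397 : ∀ x y : A, (i (n x) (n (i x y))) = (i (n x) (n (i z y))) := by intro x y; grind only [e209 (i x y) x, e98 x y, e27 y x, e396 (i z y) x]
  have e513 : ∀ x y u : A, (i (i (i z x) y) (n (i x u))) = (i y (n (i x u))) := by intro x y u; grind only [e426 x y (n (i x u)), e495 (n x) (n (i x u)) y, e397 x u, e131 x (i z u), e127 x u, e47 (n (i x u)) y]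
  have e387 : ∀ x y u : A, (i (i x (n (i y u))) (n y)) = (i (i x (n u)) (n y)) := by intro x y u; grind only [e241 x (n (i y u)) (n y), e181 y u, e241 x (n u) (n y)]
  have e494 : ∀ x y u : A, (i (n (i (i x y) x)) u) = (i (i z y) (i (n x) u)) := by intro x y u; grind only [e38 y x, e186 x y, e424 (n x) (i y (n (i x (n z)))) u, e387 y x (n z), e4 z, e3 y, e278 y (n x) u]
  have e62 : ∀ x y : A, (i (i z x) (i y (n x))) = (i y (n x)) := by intro x y; grind only [e4 x, e59 (n x) y]
  have e172 : ∀ x y : A, (i x (i y (n z))) = (i z (i x (n y))) := by intro x y; grind only [e12 y, e166 x (n y)]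
  have e232 : ∀ x y : A, (n (i (i x y) (n (i z (n x))))) = (i (n y) (n x)) := by intro x y; grind only [e12 x, e163 x y]
  have e262 : ∀ x y : A, (n (i (n x) (n (i z y)))) = (i x (n (i z (n y)))) := by intro x y; grind only [e181 (i z y) x, e4 y, e12 (n y), e13 (n y), e90 y x, e232 (i z (n y)) (n x), e4 x]
  have e401 : ∀ x y : A, (n (i (n x) (n (i x y)))) = (i x (n (i z (n y)))) := by intro x y; grind only [e62 (i x y) (n x), e90 (i x y) (i (n x) (n (i x y))), e131 x y, e172 (n x) y, e13 y, e397 x y, e150 (n x) (n (i z y)), e262 x y]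
  have e325 : ∀ x y u : A, (i (i x y) (n (i u (n x)))) = (n (i (i y u) (n x))) := by intro x y u; grind only [e4 x, e160 (n x) y u]
  have e293 : ∀ x y u : A, (i (i x (i y (n (i z u)))) u) = (i (i x (n y)) u) := by intro x y u; grind only [e5 u x (i y (n (i z u))), e51 y u, e160 u x (n y), e4 (i (i x (n y)) u)]
  have e342 : ∀ x y : A, (i (n x) (i (i x (n y)) y)) = (i (n x) y) := by intro x y; grind only [e80 x y, e339 (n x) y]
  have e346 : ∀ x y : A, (i (i (n x) (n (i x (i z y)))) y) = (i x y) := by intro x y; grind only [e4 (i z y), e293 (n x) (i x (n (n (i z y)))) y, e342 x (n (i z y)), e241 (n x) z y, e3 (n x), e4 x]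
  have e347 : ∀ x y : A, (i (i (n x) (n (i z (i x y)))) y) = (i x y) := by intro x y; grind only [e166 x y, e346 x y]
  have e351 : ∀ x y : A, (i (n x) (i y (n (i z (n (i y x)))))) = (i y x) := by intro x y; grind only [e262 y (i y x), e181 (i (n y) (n (i z (i y x)))) x, e347 y x, e164 (n (i y x)) y, e4 (i y x), e175 y x]
  have e352 : ∀ x y : A, (i (n x) (n (i (n y) (n (i y x))))) = (i y x) := by intro x y; grind only [e3 y, e325 (i y x) y z, e49 y x, e351 x (i (i y x) y)]
  have e361 : ∀ x y u : A, (n (i (i (i (i x y) u) y) u)) = (n (i (i x y) u)) := by intro x y u; grind only [e326 (i x y) u y, e4 (i (i x y) u), e160 u x y, e184 (i (n u) x) (n (i y u))]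
  have e362 : ∀ x y u : A, (i (i (i (i x y) u) y) u) = (i (i x y) u) := by intro x y u; grind only [e4 (i (i (i (i x y) u) y) u), e361 x y u, e4 (i (i x y) u)]
  have e577 : ∀ x y u : A, (i (i (i (i x y) u) (i x (n (i z (n y))))) u) = (i (i x y) u) := by intro x y u; grind only [e401 x y, e352 y x, e362 (n y) (n (i (n x) (n (i x y)))) u, e164 (n y) x, e4 y]
  have e578 : ∀ x y u : A, (i (n (i (i x y) u)) x) = (i (i z y) (i (n u) x)) := by intro x y u; grind only [e160 u x y, e513 y (i (n u) x) u, e184 y u, e3 (i y u), e326 y u z, e4 u, e494 u y x, e38 y u, e577 (i y u) (n u) x]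
  have e580 : ∀ x y u : A, (i (n (i x y)) (i x (n u))) = (i (n y) (i x (n u))) := by intro x y u; grind only [e395 u (n (i x y)) x, e491 u (i x y) (i x (n u)), e434 u x y, e44 u x, e578 (i x (n u)) x y, e393 x (n y) (n u)]
  have e581 : ∀ x y u : A, (i (n (i x y)) (i x u)) = (i (n y) (i x u)) := by intro x y u; grind only [e4 u, e580 x y (n u)]
  have e398 : ∀ x y : A, (i x (n (i (n x) y))) = (i x (n (i z y))) := by intro x y; grind only [e4 x, e397 (n x) y]
  have e582 : ∀ x y u : A, (i (i (n x) y) (i x u)) = (i (i z y) (i x u)) := by intro x y u; grind only [e4 (i (n x) y), e581 x (n (i (n x) y)) u, e398 x y, e581 x (n (i z y)) u, e4 (i z y)]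
  have e681 : ∀ x y u : A, (i x (i (i (n x) y) u)) = (i x (i (i z y) u)) := by intro x y u; grind only [e662 (i (n x) y) x u, e680 x y u, e582 x y (i (i z y) u), e412 (i z y) x u]
  have e404 : ∀ x y u : A, (i (i z x) (i (i (n x) y) u)) = (i (i (n x) y) u) := by intro x y u; grind only [e4 x, e3 (n x), e133 x z, e266 (i x (n z)) (i (n x) y) u, e193 x y, e175 (i (n x) y) u]
  have e673 : ∀ x y u : A, (i (i (n x) y) (i (i (n y) x) u)) = (i (i (n y) x) u) := by intro x y u; grind only [e182 y x, e582 (i (n y) x) y u, e404 y x u]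
  have e686 : ∀ x y u : A, (i (i (n x) y) (i (i z x) u)) = (i (i (n y) x) u) := by intro x y u; grind only [e681 (i (n x) y) x u, e182 x y, e673 x y u]
  have e706 : ∀ x y u : A, (i (i x y) (i (i z (n x)) u)) = (i (i (n y) (n x)) u) := by intro x y u; grind only [e4 x, e686 (n x) y u]
  have e707 : ∀ x y u : A, (i (i z (n (i x y))) (i x (i (i z (n y)) u))) = (i x (i (i z (n y)) u)) := by intro x y u; grind only [e426 (i x y) x (i (i z (n y)) u), e43 x y, e634 x y (i (i z (n y)) u), e706 y x u, e681 x (n y) u]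
  exact ⟨e23, e28, e427, e428, e707⟩

theorem stmt14 (A : Type*) (imp : A → A → A) (z : A)
    (hI : ∀ x y w : A, imp (imp x y) w = imp (imp (imp (imp w z) x) (imp (imp y w) z)) z)
    (hI0 : imp (imp z z) z = z)
    (hInv : ∀ x : A, imp (imp x z) z = x) :
    Equivalence (fun x y : A => imp (imp x (imp y z)) x = x ∧ imp (imp y (imp x z)) y = y) ∧
    (∀ a b c d : A,
      (imp (imp a (imp b z)) a = a ∧ imp (imp b (imp a z)) b = b) →
      (imp (imp c (imp d z)) c = c ∧ imp (imp d (imp c z)) d = d) →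
      (imp (imp (imp a c) (imp (imp b d) z)) (imp a c) = imp a c ∧
       imp (imp (imp b d) (imp (imp a c) z)) (imp b d) = imp b d)) := by
  obtain ⟨hid, h3, has, hA, hB⟩ :=
    stmt14_aux A imp (fun x => imp x z) z (fun _ => rfl) hInv hI
  simp only [h3]
  have tr : ∀ a b c : A, (imp (imp z (imp b z)) a = a ∧ imp (imp z (imp a z)) b = b) →
      (imp (imp z (imp c z)) b = b ∧ imp (imp z (imp b z)) c = c) →
      (imp (imp z (imp c z)) a = a ∧ imp (imp z (imp a z)) c = c) := by
    rintro a b c ⟨h1, h2⟩ ⟨h4, h5⟩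
    have k1 := has c b a
    have k2 := has a b c
    simp only [h1, h2, h4, h5] at k1 k2
    exact ⟨k1, k2⟩
  refine ⟨⟨fun x => ?_, fun h => ⟨h.2, h.1⟩, fun {a b c} h k => tr a b c h k⟩, ?_⟩
  · have e : imp (imp z (imp x z)) x = x := by
      rw [← h3]
      have h := hid (imp x z)
      simp only [hInv] at h
      rw [h]; exact hid x
    exact ⟨e, e⟩
  · rintro a b c d ⟨h1, h2⟩ ⟨h4, h5⟩
    refine tr (imp a c) (imp b c) (imp b d) ⟨?_, ?_⟩ ⟨?_, ?_⟩
    · have := hA b c a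
      simpa only [h1] using this
    · have := hA a c b
      simpa only [h2] using this
    · have := hB b d c
      simpa only [h4] using this
    · have := hB b c d
      simpa only [h5] using this
end

section
/- Every simple implication zroupoid satisfying x'' = x and having at least 3 elements satisfies the De Morgan identity (x → y) → x = x. -/
theorem aux {A : Type*} (i : A → A → A) (z : A) (n : A → A) (hn : ∀ x, i x z = n x)
    (hI : ∀ x y w : A, i (i x y) w = n (i (i (n w) x) (n (i y w))))
    (hInv : ∀ x : A, n (n x) = x) :
    (∀ a b c : A, (i (n a) a) = a) ∧
    (∀ a b c : A, (i z (n (i a b))) = (i z (i (n a) (n b)))) ∧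
    (∀ a b c : A, (i (i z a) (i (i z a) b)) = (i (i z a) b)) ∧
    (∀ a b c : A, (i (i z a) (i (i z b) (i (i z a) c))) = (i (i z b) (i (i z a) c))) ∧
    (∀ a b c : A, (i (i z (i a b)) c) = (i (i z (n a)) (i (i z b) c))) := by
  have c1 : ∀ x0 : A, (n (n x0)) = x0 := hInv
  have c0 : ∀ x0 : A, (i x0 z) = (n x0) := hn
  have c2 : ∀ x0 x1 x2 : A, (n (i (i (n x0) x1) (n (i x2 x0)))) = (i (i x1 x2) x0) := fun x0 x1 x2 => (hI x1 x2 x0).symm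
  have c5 : ∀ x0 x1 : A, (n (i x0 (n (i x1 x0)))) = (i (i z x1) x0) := by
    intro x0 x1
    have h0 := c1 x0
    have h1 := c0 (n x0)
    have h2 := c2 x0 z x1
    grind only
  have c6 : ∀ x0 x1 : A, (n (i (i (n z) x0) x1)) = (n (i x0 x1)) := by
    intro x0 x1
    have h0 := c1 x1
    have h1 := c0 x1
    have h2 := c2 z x0 x1
    have h3 := c0 (i x0 x1)
    grind only
  have c9 : ∀ x0 : A, (i (n z) x0) = x0 := by
    intro x0
    have h0 := c1 (i (n z) x0)
    have h1 := c0 (i (n z) x0)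
    have h2 := c6 x0 z
    have h3 := c0 x0
    have h4 := c1 x0
    grind only
  have c18 : ∀ x0 : A, (i (i z (n z)) x0) = (n (i x0 (n x0))) := by
    intro x0
    have h0 := c5 x0 (n z)
    have h1 := c9 x0
    grind only
  have c17 : ∀ x0 : A, (i (i z x0) (n z)) = (i x0 (n z)) := by
    intro x0
    have h0 := c5 (n z) x0
    have h1 := c9 (n (i x0 (n z)))
    have h2 := c1 (i x0 (n z))
    grind only
  have c23 : (i z (n z)) = (n z) := by
    have h0 := c17 z
    have h1 := c0 z
    have h2 := c9 (n z)
    grind only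
  have c193 : ∀ x0 : A, (n (i x0 (n x0))) = x0 := by
    intro x0
    have h0 := c18 x0
    have h1 := c23
    have h2 := c9 x0
    grind only
  have c194 : ∀ x0 : A, (i x0 (n x0)) = (n x0) := by
    intro x0
    have h0 := c1 (i x0 (n x0))
    have h1 := c193 x0
    grind only
  have c226 : ∀ x0 : A, (i (n x0) x0) = x0 := by
    intro x0
    have h0 := c1 x0
    have h1 := c194 (n x0)
    grind only
  have c3 : ∀ x0 x1 x2 : A, (i (i (n x0) x1) (n (i x2 x0))) = (n (i (i x1 x2) x0)) := by
    intro x0 x1 x2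
    have h0 := c1 (i (i (n x0) x1) (n (i x2 x0)))
    have h1 := c2 x0 x1 x2
    grind only
  have c25 : ∀ x0 : A, (n (i (n x0) (n z))) = (n (i z x0)) := by
    intro x0
    have h0 := c0 x0
    have h1 := c3 (n z) x0 z
    have h2 := c23
    have h3 := c1 z
    have h4 := c0 (i z x0)
    grind only
  have c26 : ∀ x0 : A, (i (n x0) (n z)) = (i z x0) := by
    intro x0
    have h0 := c1 (i (n x0) (n z))
    have h1 := c25 x0
    have h2 := c1 (i z x0)
    grind only
  have c44 : ∀ x0 : A, (i x0 (n z)) = (i z (n x0)) := by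
    intro x0
    have h0 := c1 x0
    have h1 := c26 (n x0)
    grind only
  have c4 : ∀ x0 x1 x2 : A, (n (i (i x0 x1) (n (i x2 (n x0))))) = (i (i x1 x2) (n x0)) := by
    intro x0 x1 x2
    have h0 := c1 x0
    have h1 := c2 (n x0) x1 x2
    grind only
  have c241 : ∀ x0 x1 : A, (i (i z x0) x1) = (i (i x1 x0) x1) := by
    intro x0 x1
    have h0 := c5 x1 x0
    have h1 := c1 x1
    have h2 := c226 x1
    have h3 := c4 (n x1) x1 x0
    grind only
  have c49 : ∀ x0 : A, (i z (n (i z x0))) = (i x0 (n z)) := by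
    intro x0
    have h0 := c44 (i z x0)
    have h1 := c17 x0
    grind only
  have c62 : ∀ x0 : A, (i z (n (i x0 (n z)))) = (i z x0) := by
    intro x0
    have h0 := c44 x0
    have h1 := c49 (n x0)
    have h2 := c44 (n x0)
    have h3 := c1 x0
    grind only
  have c68 : ∀ x0 : A, (i z (i x0 (n z))) = (i x0 (n z)) := by
    intro x0
    have h0 := c1 (i x0 (n z))
    have h1 := c44 (n (i x0 (n z)))
    have h2 := c49 (n (i x0 (n z)))
    have h3 := c62 x0
    have h4 := c49 x0
    grind only
  have c87 : ∀ x0 : A, (i z (i z (n x0))) = (i x0 (n z)) := by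
    intro x0
    have h0 := c44 x0
    have h1 := c68 x0
    grind only
  have c90 : ∀ x0 : A, (i z (i z x0)) = (i z x0) := by
    intro x0
    have h0 := c1 x0
    have h1 := c87 (n x0)
    have h2 := c44 (n x0)
    grind only
  have c343 : ∀ x0 x1 : A, (i (i x0 (i z x1)) x0) = (i (i z x1) x0) := by
    intro x0 x1
    have h0 := c241 (i z x1) x0
    have h1 := c90 x1
    grind only
  have c197 : ∀ x0 x1 : A, (n (i (i x0 x1) (n x1))) = (i (i x1 x0) x1) := by
    intro x0 x1
    have h0 := c3 (n x1) x0 x1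
    have h1 := c193 x1
    have h2 := c1 x1
    grind only
  have c15 : ∀ x0 x1 : A, (i (i (n x0) x1) (n x0)) = (n (i (i x1 (n z)) x0)) := by
    intro x0 x1
    have h0 := c9 x0
    have h1 := c3 x0 x1 (n z)
    grind only
  have c359 : ∀ x0 x1 : A, (n (i (i x0 (n z)) x1)) = (i (i z x0) (n x1)) := by
    intro x0 x1
    have h0 := c15 x1 x0
    have h1 := c241 x0 (n x1)
    grind only
  have c362 : ∀ x0 x1 : A, (i (i z (n x0)) (i x1 x0)) = (i x1 x0) := by
    intro x0 x1
    have h0 := c1 (i x1 x0)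
    have h1 := c359 (n x0) (n (i x1 x0))
    have h2 := c3 x0 (n z) x1
    have h3 := c9 x1
    grind only
  have c609 : ∀ x0 x1 : A, (i (i (i x0 x1) x0) x1) = (i x0 x1) := by
    intro x0 x1
    have h0 := c1 (i (i (i x0 x1) x0) x1)
    have h1 := c3 x1 (i x0 x1) x0
    have h2 := c197 (n x1) (i x0 x1)
    have h3 := c241 (n x1) (i x0 x1)
    have h4 := c362 x1 x0
    grind only
  have c640 : ∀ x0 x1 : A, (i (i (i z x0) x1) x0) = (i x1 x0) := by
    intro x0 x1
    have h0 := c241 x0 x1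
    have h1 := c609 x1 x0
    grind only
  have c664 : ∀ x0 x1 : A, (i (i z x0) (i z x1)) = (i x0 (i z x1)) := by
    intro x0 x1
    have h0 := c241 x0 (i z x1)
    have h1 := c90 x1
    have h2 := c640 (i z x1) x0
    grind only
  have c24 : ∀ x0 x1 : A, (n (i (i x0 (i z x1)) (n z))) = (i (i z x0) (n (i x1 (n z)))) := by
    intro x0 x1
    have h0 := c3 (n z) x0 (i z x1)
    have h1 := c17 x1
    have h2 := c1 z
    grind only
  have c13 : ∀ x0 x1 x2 : A, (i (i x0 x1) (n (i x2 (n x0)))) = (n (i (i x1 x2) (n x0))) := by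
    intro x0 x1 x2
    have h0 := c1 x0
    have h1 := c3 (n x0) x1 x2
    grind only
  have c872 : ∀ x0 x1 : A, (n (i z (n (i x0 (i z x1))))) = (n (i z (n (i x0 x1)))) := by
    intro x0 x1
    have h0 := c44 (i x0 (i z x1))
    have h1 := c24 x0 x1
    have h2 := c13 z x0 x1
    have h3 := c44 (i x0 x1)
    grind only
  have c877 : ∀ x0 x1 : A, (i z (i x0 (i z x1))) = (i z (i x0 x1)) := by
    intro x0 x1
    have h0 := c1 (i x0 (i z x1))
    have h1 := c44 (n (i x0 (i z x1)))
    have h2 := c49 (n (i x0 (i z x1)))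
    have h3 := c872 x0 x1
    have h4 := c49 (n (i x0 x1))
    have h5 := c44 (n (i x0 x1))
    have h6 := c1 (i x0 x1)
    grind only
  have c950 : ∀ x0 x1 : A, (i z (i (i z x0) x1)) = (i z (i x0 x1)) := by
    intro x0 x1
    have h0 := c343 x1 x0
    have h1 := c664 x1 x0
    have h2 := c877 (i (i z x1) (i z x0)) x1
    have h3 := c343 (i z x1) x0
    have h4 := c664 x0 x1
    have h5 := c877 x0 x1
    grind only
  have c7 : ∀ x0 x1 x2 x3 : A, (n (i (i (i x0 x1) x2) (i (i x3 x0) x1))) = (i (i x2 (i (n x1) x3)) (n (i x0 x1))) := by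
    intro x0 x1 x2 x3
    have h0 := c1 (i x0 x1)
    have h1 := c2 x1 x3 x0
    have h2 := c2 (n (i x0 x1)) x2 (i (n x1) x3)
    grind only
  have c73 : ∀ x0 x1 : A, (n (i (i x0 x1) x0)) = (i (i x1 x0) (n x0)) := by
    intro x0 x1
    have h0 := c9 x0
    have h1 := c23
    have h2 := c7 (n z) x0 x1 z
    have h3 := c0 (n x0)
    have h4 := c1 x0
    grind only
  have c227 : ∀ x0 x1 : A, (n (i (i x0 x1) x0)) = (i x0 (n (i x1 x0))) := by
    intro x0 x1
    have h0 := c1 x0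
    have h1 := c3 x0 (n (n x0)) x1
    have h2 := c194 (n x0)
    grind only
  have c742 : ∀ x0 x1 : A, (i (i x0 x1) (n x1)) = (i x1 (n (i x0 x1))) := by
    intro x0 x1
    have h0 := c73 x1 x0
    have h1 := c227 x1 x0
    grind only
  have c762 : ∀ x0 x1 : A, (i (i z (n x0)) (n x1)) = (n (i (i z x0) x1)) := by
    intro x0 x1
    have h0 := c0 x0
    have h1 := c359 (i x0 z) x1
    have h2 := c742 x0 z
    have h3 := c1 x0
    grind only
  have c29 : ∀ x0 x1 : A, (n (i (i x0 (n x1)) (n z))) = (i (i z x0) (n (i z x1))) := by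
    intro x0 x1
    have h0 := c3 (n z) x0 (n x1)
    have h1 := c25 x1
    have h2 := c1 z
    grind only
  have c1052 : ∀ x0 x1 : A, (n (i z (n (i x0 (n x1))))) = (i (i z x0) (n (i z x1))) := by
    intro x0 x1
    have h0 := c44 (i x0 (n x1))
    have h1 := c29 x0 x1
    grind only
  have c1610 : ∀ x0 x1 : A, (n (i z (i x0 x1))) = (n (i x0 (i z x1))) := by
    intro x0 x1
    have h0 := c950 x0 x1
    have h1 := c1 (i (i z x0) x1)
    have h2 := c762 x0 x1
    have h3 := c1052 (i z (n x0)) x1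
    have h4 := c90 (n x0)
    have h5 := c762 x0 (i z x1)
    have h6 := c664 x0 x1
    grind only
  have c2344 : ∀ x0 x1 : A, (i x0 (i z x1)) = (i z (i x0 x1)) := by
    intro x0 x1
    have h0 := c1 (i x0 (i z x1))
    have h1 := c1610 x0 x1
    have h2 := c1 (i z (i x0 x1))
    grind only
  have c2411 : ∀ x0 x1 : A, (i x0 (i x1 (n z))) = (i z (i x0 (n x1))) := by
    intro x0 x1
    have h0 := c44 x1
    have h1 := c2344 x0 (n x1)
    grind only
  have c37 : ∀ x0 x1 x2 x3 : A, (n (i (i (i x0 (n (i x1 x0))) x2) (n (i x3 (i (i z x1) x0))))) = (i (i x2 x3) (i (i z x1) x0)) := by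
    intro x0 x1 x2 x3
    have h0 := c5 x0 x1
    have h1 := c4 (i x0 (n (i x1 x0))) x2 x3
    grind only
  have c2686 : ∀ x0 x1 : A, (i z (i (n x0) (n x1))) = (i z (n (i x0 x1))) := by
    intro x0 x1
    have h0 := c2411 (n x0) x1
    have h1 := c49 x1
    have h2 := c44 (i z x1)
    have h3 := c0 x0
    have h4 := c37 (n z) x1 x0 z
    have h5 := c68 (i z x1)
    have h6 := c9 (n (i x1 (n z)))
    have h7 := c241 x0 (n (i x1 (n z)))
    have h8 := c13 z x0 x1
    have h9 := c44 (i x0 x1)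
    have h10 := c1 (i z (n (i x0 x1)))
    grind only
  have c335 : ∀ x0 x1 : A, (i (i z (i x0 x1)) x0) = (i (i z x1) x0) := by
    intro x0 x1
    have h0 := c5 x0 (i x0 x1)
    have h1 := c241 x1 x0
    have h2 := c5 x0 (i z x1)
    have h3 := c90 x1
    grind only
  have c827 : ∀ x0 x1 : A, (i (i (i z x0) x1) (i x1 x0)) = (i x1 (i x1 x0)) := by
    intro x0 x1
    have h0 := c335 x1 x0
    have h1 := c640 (i x1 x0) x1
    grind only
  have c12 : ∀ x0 x1 : A, (n (i (i (n x0) x1) (n x0))) = (i (i x1 (n z)) x0) := by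
    intro x0 x1
    have h0 := c9 x0
    have h1 := c2 x0 x1 (n z)
    grind only
  have c55 : ∀ x0 : A, (n (i (n x0) (n (i x0 (n z))))) = (n x0) := by
    intro x0
    have h0 := c44 x0
    have h1 := c5 (n x0) z
    have h2 := c0 z
    have h3 := c9 (n x0)
    grind only
  have c108 : ∀ x0 : A, (i (n x0) (n (i x0 (n z)))) = x0 := by
    intro x0
    have h0 := c1 (i (n x0) (n (i x0 (n z))))
    have h1 := c55 x0
    have h2 := c1 x0
    grind only
  have c116 : ∀ x0 : A, (i x0 (n (i z x0))) = (n x0) := by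
    intro x0
    have h0 := c1 x0
    have h1 := c44 (n x0)
    have h2 := c108 (n x0)
    grind only
  have c219 : ∀ x0 : A, (i (i z (n x0)) x0) = x0 := by
    intro x0
    have h0 := c90 (n x0)
    have h1 := c1 (i z (n x0))
    have h2 := c44 (n (i z (n x0)))
    have h3 := c12 x0 (n (i z (n x0)))
    have h4 := c116 (n x0)
    have h5 := c1 x0
    have h6 := c193 x0
    grind only
  have c254 : ∀ x0 : A, (i (i z x0) (n x0)) = (n x0) := by
    intro x0
    have h0 := c1 x0
    have h1 := c219 (n x0)
    grind only
  have c300 : ∀ x0 x1 : A, (i (i x0 (n z)) x1) = (i (i x0 (n x1)) x1) := by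
    intro x0 x1
    have h0 := c12 x1 x0
    have h1 := c194 x1
    have h2 := c254 x1
    have h3 := c7 x1 (n x1) x0 z
    have h4 := c1 x1
    have h5 := c0 x1
    grind only
  have c1084 : ∀ x0 x1 : A, (i (i z (n x0)) x1) = (i (i x0 (n x1)) x1) := by
    intro x0 x1
    have h0 := c44 x0
    have h1 := c300 x0 x1
    grind only
  have c1793 : ∀ x0 x1 : A, (i (i z (n (i x0 x1))) x1) = (i (i z x0) x1) := by
    intro x0 x1
    have h0 := c1 x1
    have h1 := c1084 (i x0 (n (n x1))) x1
    have h2 := c300 x0 (n x1)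
    have h3 := c1084 (i x0 (n z)) x1
    have h4 := c62 x0
    grind only
  have c2499 : ∀ x0 x1 : A, (i z (i (n (i x0 x1)) x1)) = (i z (i x0 x1)) := by
    intro x0 x1
    have h0 := c950 (n (i x0 x1)) x1
    have h1 := c1793 x0 x1
    have h2 := c950 x0 x1
    grind only
  have c2774 : ∀ x0 x1 : A, (i (n (i x0 x1)) x1) = (i (n x1) (i x0 x1)) := by
    intro x0 x1
    have h0 := c9 (i (n (i x0 x1)) x1)
    have h1 := c0 z
    have h2 := c5 (i (n (i x0 x1)) x1) z
    have h3 := c2499 x0 x1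
    have h4 := c3 (i x0 x1) x1 z
    have h5 := c0 x1
    have h6 := c1 (i (n x1) (i x0 x1))
    grind only
  have c20 : ∀ x0 x1 x2 : A, (i (i (i x0 x1) x2) (i (i z x0) x1)) = (n (i (i x2 x1) (n (i x0 x1)))) := by
    intro x0 x1 x2
    have h0 := c1 (i x0 x1)
    have h1 := c5 x1 x0
    have h2 := c3 (n (i x0 x1)) x2 x1
    grind only
  have c592 : ∀ x0 x1 : A, (i (i (i z x0) x1) (i (i z x1) x0)) = (i x1 x0) := by
    intro x0 x1
    have h0 := c241 x0 x1
    have h1 := c20 x1 x0 x1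
    have h2 := c194 (i x1 x0)
    have h3 := c1 (i x1 x0)
    grind only
  have c45 : ∀ x0 x1 : A, (i (i z x0) (n (i x1 x0))) = (n (i x1 x0)) := by
    intro x0 x1
    have h0 := c26 x0
    have h1 := c3 x0 (n z) x1
    have h2 := c9 x1
    grind only
  have c574 : ∀ x0 x1 : A, (i (n (i x0 x1)) (i (i z x0) x1)) = (i x0 x1) := by
    intro x0 x1
    have h0 := c0 (i x0 x1)
    have h1 := c20 x0 x1 z
    have h2 := c45 x1 x0
    have h3 := c1 (i x0 x1)
    grind only
  have c4063 : ∀ x0 x1 : A, (i (n x0) (i x1 x0)) = (i x1 x0) := by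
    intro x0 x1
    have h0 := c2774 x1 x0
    have h1 := c592 x0 (n (i x1 x0))
    have h2 := c45 x0 x1
    have h3 := c1793 x1 x0
    have h4 := c574 x1 x0
    grind only
  have c4822 : ∀ x0 x1 : A, (n (i (n x0) (i (n x0) x1))) = (n (i (n x0) x1)) := by
    intro x0 x1
    have h0 := c0 x0
    have h1 := c827 x1 (i x0 z)
    have h2 := c7 z x1 (i x0 z) x0
    have h3 := c4063 x0 (n x1)
    have h4 := c3 x1 x0 z
    grind only
  have c5055 : ∀ x0 x1 : A, (n (i x0 (i x0 x1))) = (n (i x0 x1)) := by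
    intro x0 x1
    have h0 := c1 x0
    have h1 := c4822 (n x0) x1
    grind only
  have c5100 : ∀ x0 x1 : A, (i x0 (i x0 x1)) = (i x0 x1) := by
    intro x0 x1
    have h0 := c1 (i x0 (i x0 x1))
    have h1 := c5055 x0 x1
    have h2 := c1 (i x0 x1)
    grind only
  have c4119 : ∀ x0 x1 : A, (i (n (i x0 x1)) x1) = (i x0 x1) := by
    intro x0 x1
    have h0 := c2774 x0 x1
    have h1 := c4063 x1 x0
    grind only
  have c4156 : ∀ x0 x1 x2 : A, (n (i (i x0 (n (i x1 x2))) x2)) = (n (i (i x0 x1) x2)) := by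
    intro x0 x1 x2
    have h0 := c3 x2 x0 (n (i x1 x2))
    have h1 := c4119 x1 x2
    have h2 := c3 x2 x0 x1
    grind only
  have c10969 : ∀ x0 x1 x2 : A, (i (i x0 (n (i x1 x2))) x2) = (i (i x0 x1) x2) := by
    intro x0 x1 x2
    have h0 := c1 (i (i x0 (n (i x1 x2))) x2)
    have h1 := c4156 x0 x1 x2
    have h2 := c1 (i (i x0 x1) x2)
    grind only
  have c11170 : ∀ x0 x1 x2 : A, (i (i (i (n x0) x1) x2) x0) = (i (i x1 x2) x0) := by
    intro x0 x1 x2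
    have h0 := c10969 (i (n x0) x1) x2 x0
    have h1 := c3 x0 x1 x2
    have h2 := c4119 (i x1 x2) x0
    grind only
  have c11453 : ∀ x0 x1 x2 : A, (i (i z x0) (i x1 x2)) = (i (i x2 x0) (i x1 x2)) := by
    intro x0 x1 x2
    have h0 := c241 x0 (i x1 x2)
    have h1 := c4119 x1 x2
    have h2 := c11170 (i x1 x2) x2 x0
    grind only
  have c679 : ∀ x0 x1 : A, (i (i x0 (i (i z x0) x1)) x0) = (i (i x0 x1) x0) := by
    intro x0 x1
    have h0 := c197 (i (i z x0) x1) x0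
    have h1 := c640 x0 x1
    have h2 := c197 x1 x0
    grind only
  have c4414 : ∀ x0 x1 : A, (i x0 (i (i z x0) x1)) = (i x0 x1) := by
    intro x0 x1
    have h0 := c609 x0 (i (i z x0) x1)
    have h1 := c679 x0 x1
    have h2 := c20 x0 x1 x0
    have h3 := c194 (i x0 x1)
    have h4 := c1 (i x0 x1)
    grind only
  have c4451 : ∀ x0 x1 : A, (i x0 (i (i x1 x0) x1)) = (i x0 x1) := by
    intro x0 x1
    have h0 := c241 x0 x1
    have h1 := c4414 x0 x1
    grind only
  have c11459 : ∀ x0 x1 x2 : A, (i (i (i (i x0 (n x1)) x0) x2) x1) = (i (i x0 x2) x1) := by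
    intro x0 x1 x2
    have h0 := c11170 x1 (i (i x0 (n x1)) x0) x2
    have h1 := c4451 (n x1) x0
    have h2 := c11170 x1 x0 x2
    grind only
  have c15225 : ∀ x0 x1 x2 : A, (i (i (i z x0) x1) (i x2 x0)) = (i x1 (i x2 x0)) := by
    intro x0 x1 x2
    have h0 := c11459 (i z x0) (i x2 x0) x1
    have h1 := c45 x0 x2
    have h2 := c2344 (n (i x2 x0)) x0
    have h3 := c4119 x2 x0
    have h4 := c640 (i x2 x0) x1
    grind only
  have c15385 : ∀ x0 x1 x2 : A, (i (i (i x0 x1) x0) (i x2 x1)) = (i x0 (i x2 x1)) := by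
    intro x0 x1 x2
    have h0 := c241 x1 x0
    have h1 := c15225 x1 x0 x2
    grind only
  have c15582 : ∀ x0 x1 x2 : A, (i (i z x0) (i x1 (i x0 x2))) = (i x0 (i x1 (i x0 x2))) := by
    intro x0 x1 x2
    have h0 := c11453 x0 x1 (i x0 x2)
    have h1 := c5100 x0 x2
    have h2 := c15385 x0 (i x0 x2) x1
    grind only
  have c284 : ∀ x0 x1 : A, (i x0 (n (i x1 (n (i z (n x0)))))) = (i (n x1) (n x0)) := by
    intro x0 x1
    have h0 := c219 x0
    have h1 := c13 (i z (n x0)) x0 x1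
    have h2 := c13 x0 x1 z
    have h3 := c0 x1
    have h4 := c1 (i (n x1) (n x0))
    grind only
  have c303 : ∀ x0 x1 : A, (i (n x0) (n (i x1 (n (i z x0))))) = (i (n x1) x0) := by
    intro x0 x1
    have h0 := c254 x0
    have h1 := c13 (i z x0) (n x0) x1
    have h2 := c3 x0 x1 z
    have h3 := c0 x1
    have h4 := c1 (i (n x1) x0)
    grind only
  have c14 : ∀ x0 x1 : A, (i x0 (n (i x1 x0))) = (n (i (i z x1) x0)) := by
    intro x0 x1
    have h0 := c1 x0
    have h1 := c0 (n x0)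
    have h2 := c3 x0 z x1
    grind only
  have c308 : ∀ x0 : A, (i (n (i z x0)) x0) = (i z x0) := by
    intro x0
    have h0 := c1 x0
    have h1 := c116 x0
    have h2 := c14 (n (i z x0)) x0
    have h3 := c194 (i z x0)
    have h4 := c1 (i z x0)
    grind only
  have c328 : ∀ x0 x1 : A, (n (i (i x0 (n (i z x1))) x1)) = (n (i (n x0) x1)) := by
    intro x0 x1
    have h0 := c3 x1 x0 (n (i z x1))
    have h1 := c308 x1
    have h2 := c3 x1 x0 z
    have h3 := c0 x0
    grind only
  have c3746 : ∀ x0 x1 : A, (i (n (i x0 (n (i x1 (n z))))) x1) = (i x0 x1) := by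
    intro x0 x1
    have h0 := c49 x1
    have h1 := c303 x1 (i x0 (n (i z (n (i z x1)))))
    have h2 := c328 x0 (n (i z x1))
    have h3 := c303 x1 (n x0)
    have h4 := c1 x0
    grind only
  have c3798 : ∀ x0 x1 : A, (i (n (i x0 (n (i z (n x1))))) x1) = (i x0 x1) := by
    intro x0 x1
    have h0 := c44 x1
    have h1 := c3746 x0 x1
    grind only
  have c1452 : ∀ x0 x1 : A, (i (n (i x0 x1)) (i (i x1 x0) x1)) = (i x0 x1) := by
    intro x0 x1
    have h0 := c241 x0 x1
    have h1 := c574 x0 x1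
    grind only
  have c333 : ∀ x0 x1 : A, (n (i (i z x0) (n x1))) = (i (i x0 (n z)) x1) := by
    intro x0 x1
    have h0 := c241 x0 (n x1)
    have h1 := c12 x1 x0
    grind only
  have c1233 : ∀ x0 x1 : A, (i (i x0 (n z)) (n x1)) = (n (i (i z x0) x1)) := by
    intro x0 x1
    have h0 := c333 x0 (n x1)
    have h1 := c1 x1
    grind only
  have c1918 : ∀ x0 x1 x2 : A, (i (i x0 (i z x1)) x2) = (i (i x0 (i x2 x1)) x2) := by
    intro x0 x1 x2
    have h0 := c1 (i (i x0 (i z x1)) x2)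
    have h1 := c3 x2 x0 (i z x1)
    have h2 := c9 (n x2)
    have h3 := c1233 x1 x2
    have h4 := c7 (n z) (n x2) x0 x1
    have h5 := c1 x2
    grind only
  have c680 : ∀ x0 x1 : A, (i (i (i x0 x1) (i (i z x1) x0)) x1) = (i x0 x1) := by
    intro x0 x1
    have h0 := c640 x1 x0
    have h1 := c609 (i (i z x1) x0) x1
    grind only
  have c5195 : ∀ x0 x1 : A, (i (i z (i x0 x1)) (i x1 x0)) = (i x1 x0) := by
    intro x0 x1
    have h0 := c950 x0 x1
    have h1 := c241 (i (i z x0) x1) (i x1 x0)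
    have h2 := c335 x1 x0
    have h3 := c5100 x1 x0
    have h4 := c680 x1 (i x1 x0)
    grind only
  have c9213 : ∀ x0 x1 : A, (i (i x0 x1) (i x1 x0)) = (i x1 x0) := by
    intro x0 x1
    have h0 := c1452 x0 x1
    have h1 := c1918 (n (i x0 x1)) x1 (i x1 x0)
    have h2 := c2344 (n (i x0 x1)) x1
    have h3 := c4119 x0 x1
    have h4 := c5195 x0 x1
    grind only
  have c9375 : ∀ x0 x1 : A, (i (i x0 x1) (i (n x0) (n x1))) = (i (n x0) (n x1)) := by
    intro x0 x1
    have h0 := c284 x1 x0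
    have h1 := c3798 x0 x1
    have h2 := c9213 (n (i x0 (n (i z (n x1))))) x1
    grind only
  have c14494 : ∀ x0 x1 x2 : A, (i (i (n x0) (n x1)) (i x2 (i x0 x1))) = (i x2 (i x0 x1)) := by
    intro x0 x1 x2
    have h0 := c9375 x0 x1
    have h1 := c11453 (i (n x0) (n x1)) x2 (i x0 x1)
    have h2 := c2686 x0 x1
    have h3 := c362 (i x0 x1) x2
    grind only
  have c11266 : ∀ x0 x1 x2 : A, (i (i x0 (n z)) (i x1 x2)) = (i (i x0 x1) (i x1 x2)) := by
    intro x0 x1 x2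
    have h0 := c300 x0 (i x1 x2)
    have h1 := c5100 x1 x2
    have h2 := c10969 x0 x1 (i x1 x2)
    grind only
  have c25687 : ∀ x0 x1 x2 : A, (i (i x0 (n z)) (i (i x0 x1) x2)) = (i (i x0 x1) x2) := by
    intro x0 x1 x2
    have h0 := c11266 x0 (i x0 x1) x2
    have h1 := c5100 x0 x1
    have h2 := c5100 (i x0 x1) x2
    grind only
  have c31626 : ∀ x0 x1 x2 : A, (i (i z x0) (i x1 (i x0 x2))) = (i x1 (i x0 x2)) := by
    intro x0 x1 x2
    have h0 := c1 x0
    have h1 := c44 (n x0)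
    have h2 := c14494 x0 x2 x1
    have h3 := c25687 (n x0) (n x2) (i x1 (i x0 x2))
    grind only
  have c32367 : ∀ x0 x1 x2 : A, (i x0 (i x1 (i x0 x2))) = (i x1 (i x0 x2)) := by
    intro x0 x1 x2
    have h0 := c15582 x0 x1 x2
    have h1 := c31626 x0 x1 x2
    grind only
  have c92 : ∀ x0 : A, (i z (n (i (n x0) x0))) = (i z (n x0)) := by
    intro x0
    have h0 := c44 (i (n x0) x0)
    have h1 := c4 z (n x0) x0
    have h2 := c87 x0
    have h3 := c5 (i z (n x0)) z
    have h4 := c0 z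
    have h5 := c9 (i z (n x0))
    grind only
  have c146 : ∀ x0 x1 x2 : A, (n (i (i (i z (n x0)) x1) (i (n x2) (n (i (n x0) x0))))) = (i (i x1 (i (i (n x0) x0) x2)) (n (i z (n x0)))) := by
    intro x0 x1 x2
    have h0 := c0 x2
    have h1 := c92 x0
    have h2 := c7 z (n (i (n x0) x0)) x1 x2
    have h3 := c1 (i (n x0) x0)
    grind only
  have c17727 : ∀ x0 x1 x2 : A, (i (i x0 (i x1 x2)) (n (i z (n x1)))) = (n (i x0 (i (n x2) (n x1)))) := by
    intro x0 x1 x2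
    have h0 := c226 x1
    have h1 := c146 x1 x0 x2
    have h2 := c15225 (n x1) x0 (n x2)
    grind only
  have c32 : ∀ x0 x1 : A, (i (i x0 (n z)) (n x1)) = (n (i (i x1 x0) x1)) := by
    intro x0 x1
    have h0 := c4 x1 x0 (n z)
    have h1 := c9 (n x1)
    have h2 := c1 x1
    grind only
  have c656 : ∀ x0 x1 : A, (i (i (i x0 (n z)) x1) (n x0)) = (i x1 (n x0)) := by
    intro x0 x1
    have h0 := c44 x0
    have h1 := c640 (n x0) x1
    grind only
  have c1579 : ∀ x0 x1 : A, (i (n (i (i x0 x1) x0)) (n x1)) = (i (n x0) (n x1)) := by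
    intro x0 x1
    have h0 := c32 x1 x0
    have h1 := c656 x1 (n x0)
    grind only
  have c27 : ∀ x0 : A, (n (i x0 (n z))) = (n (i z (n x0))) := by
    intro x0
    have h0 := c1 x0
    have h1 := c25 (n x0)
    grind only
  have c365 : ∀ x0 x1 : A, (n (i (i z (n x0)) x1)) = (i (i z x0) (n x1)) := by
    intro x0 x1
    have h0 := c44 x0
    have h1 := c359 x0 x1
    grind only
  have c58 : ∀ x0 x1 : A, (i (i (i z x0) x1) (n (i x0 (n z)))) = (n (i (n x1) (n (i z x0)))) := by
    intro x0 x1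
    have h0 := c1 (i z x0)
    have h1 := c49 x0
    have h2 := c3 (n (i z x0)) x1 z
    have h3 := c0 x1
    grind only
  have c5827 : ∀ x0 x1 : A, (i (n x0) (n (i z (n x1)))) = (n (i x0 (n (i z x1)))) := by
    intro x0 x1
    have h0 := c1579 x0 (i z (n x1))
    have h1 := c27 x1
    have h2 := c343 x0 (n x1)
    have h3 := c365 x1 x0
    have h4 := c58 x1 (n x0)
    have h5 := c1 x0
    grind only
  have c2718 : ∀ x0 x1 : A, (i (i x0 x1) (n (i z x1))) = (n (i x0 x1)) := by
    intro x0 x1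
    have h0 := c0 (i z x1)
    have h1 := c1 x1
    have h2 := c0 x1
    have h3 := c37 z x1 x0 (n (i x1 z))
    have h4 := c1452 x1 z
    have h5 := c640 x1 x0
    grind only
  have c17749 : ∀ x0 x1 x2 : A, (i (i x0 (i x1 x2)) (n (i z x2))) = (n (i x0 (i x1 x2))) := by
    intro x0 x1 x2
    have h0 := c1 x2
    have h1 := c44 (n x2)
    have h2 := c49 (n x2)
    have h3 := c362 x2 x1
    have h4 := c17727 x0 (i z (n x2)) (i x1 x2)
    have h5 := c5827 (i x1 x2) x2
    have h6 := c2718 x1 x2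
    have h7 := c1 (i x1 x2)
    grind only
  have c9072 : ∀ x0 x1 x2 : A, (i (i z (i x0 x1)) x2) = (i (i x0 (i x2 x1)) x2) := by
    intro x0 x1 x2
    have h0 := c2344 x0 x1
    have h1 := c1918 x0 x1 x2
    grind only
  have c12906 : ∀ x0 x1 x2 : A, (i (i (i x0 (i x1 x2)) x1) (i x0 x2)) = (i x1 (i x0 x2)) := by
    intro x0 x1 x2
    have h0 := c9 (i x0 x2)
    have h1 := c0 z
    have h2 := c9072 x0 x2 x1
    have h3 := c20 z (i x0 x2) x1
    have h4 := c2718 x1 (i x0 x2)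
    have h5 := c1 (i x1 (i x0 x2))
    grind only
  have c971 : ∀ x0 x1 : A, (i z (i x0 (n (i x1 x0)))) = (i z (n (i x1 x0))) := by
    intro x0 x1
    have h0 := c950 x0 (n (i x1 x0))
    have h1 := c45 x0 x1
    grind only
  have c15520 : ∀ x0 x1 x2 : A, (i (i z (n x0)) (i x1 (i x2 x0))) = (i x1 (i x2 x0)) := by
    intro x0 x1 x2
    have h0 := c15385 (i z (n x0)) (i x2 x0) x1
    have h1 := c362 x0 x2
    have h2 := c2344 (i x2 x0) (n x0)
    have h3 := c742 x2 x0
    have h4 := c971 x0 x2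
    have h5 := c362 (i x2 x0) x1
    grind only
  have c29681 : ∀ x0 x1 x2 : A, (i (n x0) (i x1 (i x2 x0))) = (i x1 (i x2 x0)) := by
    intro x0 x1 x2
    have h0 := c12906 x1 (n x0) (i x2 x0)
    have h1 := c4063 x0 x2
    have h2 := c241 (n x0) (i x1 (i x2 x0))
    have h3 := c15520 x0 x1 x2
    grind only
  have c33601 : ∀ x0 x1 x2 : A, (i (n (i x0 (i x1 x2))) x2) = (i x0 (i x1 x2)) := by
    intro x0 x1 x2
    have h0 := c303 x2 (i x0 (i x1 x2))
    have h1 := c17749 x0 x1 x2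
    have h2 := c1 (i x0 (i x1 x2))
    have h3 := c29681 x2 x0 x1
    grind only
  have c336 : ∀ x0 x1 : A, (i (i x0 (n z)) x1) = (i (i x1 (n x0)) x1) := by
    intro x0 x1
    have h0 := c44 x0
    have h1 := c241 (n x0) x1
    grind only
  have c33695 : ∀ x0 x1 x2 : A, (i (i z (n x0)) (i x1 x2)) = (i (i (i z x0) x1) x2) := by
    intro x0 x1 x2
    have h0 := c241 (n x0) (i x1 x2)
    have h1 := c33601 (i (i x1 x2) (n x0)) x1 x2
    have h2 := c336 x0 (i x1 x2)
    have h3 := c359 x0 (i x1 x2)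
    have h4 := c10969 (i z x0) x1 x2
    grind only
  refine ⟨?_, ?_, ?_, ?_, ?_⟩
  · intro a b c
    exact (c226 a)
  · intro a b c
    exact (c2686 a b).symm
  · intro a b c
    exact (c5100 (i z a) b)
  · intro a b c
    exact (c32367 (i z a) (i z b) c)
  · intro a b c
    have h0 := c950 a b
    have h1 := c2344 (i z a) b
    have h2 := c33695 a (i z b) c
    grind only

theorem pigeon {P Q R : Prop} (h1 : ¬(P ↔ Q)) (h2 : ¬(P ↔ R)) (h3 : ¬(Q ↔ R)) : False := by
  tauto

theorem stmt19 (A : Type*) (imp : A → A → A) (z : A)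
    (hI : ∀ x y w : A, imp (imp x y) w = imp (imp (imp (imp w z) x) (imp (imp y w) z)) z)
    (hI0 : imp (imp z z) z = z)
    (hInv : ∀ x : A, imp (imp x z) z = x)
    (hsimple : ∀ r : A → A → Prop, Equivalence r →
      (∀ a b c d : A, r a b → r c d → r (imp a c) (imp b d)) →
      (∀ a b : A, r a b ↔ a = b) ∨ (∀ a b : A, r a b))
    (hcard : ∃ a b c : A, a ≠ b ∧ a ≠ c ∧ b ≠ c) :
    ∀ x y : A, imp (imp x y) x = x := by
  obtain ⟨hneg, hL1, hidem, hreg, hL2⟩ :=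
    aux imp z (fun x => imp x z) (fun _ => rfl) hI hInv
  replace hneg : ∀ x, imp (imp x z) x = x := fun x => hneg x x x
  replace hL1 : ∀ x y, imp z (imp (imp x y) z) = imp z (imp (imp x z) (imp y z)) :=
    fun x y => hL1 x y x
  replace hidem : ∀ x y, imp (imp z x) (imp (imp z x) y) = imp (imp z x) y :=
    fun x y => hidem x y x
  have hone : ∀ x, imp (imp z z) x = x := by
    intro x
    have h := hI x z z
    rw [hInv, hI0, hInv] at h
    exact h.symm
  -- membership in the ideal of `a`
  let I : A → A → Prop := fun a x =>
    imp (imp z x) a = a ∧ imp (imp z (imp x z)) a = a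
  have half : ∀ a x y, imp (imp z (imp x y)) a = a ↔
      imp (imp z (imp x z)) a = a ∧ imp (imp z y) a = a := by
    intro a x y
    rw [hL2 x y a]
    constructor
    · intro h
      constructor
      · have := hidem (imp x z) (imp (imp z y) a)
        rwa [h] at this
      · have := hreg y (imp x z) a
        rwa [h] at this
    · rintro ⟨h1, h2⟩
      rw [h2, h1]
  have key : ∀ a x y, I a (imp x y) ↔ I a x ∧ I a y := by
    intro a x y
    simp only [I]
    rw [half a x y, hL1 x y, half a (imp x z) (imp y z), hInv x]
    constructor
    · rintro ⟨⟨h1, h2⟩, h3, h4⟩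
      exact ⟨⟨h3, h1⟩, h2, h4⟩
    · rintro ⟨⟨h3, h1⟩, h2, h4⟩
      exact ⟨⟨h1, h2⟩, h3, h4⟩
  have hz : ∀ a, I a z := by
    intro a
    refine ⟨hone a, ?_⟩
    have : imp z (imp z z) = imp z z := by
      have := hneg (imp z z)
      rwa [hI0] at this
    rw [this, hone]
  have full : ∀ a x, I a x := by
    intro a
    rcases hsimple (fun x y => I a x ↔ I a y)
      ⟨fun _ => Iff.rfl, fun h => h.symm, fun h1 h2 => h1.trans h2⟩
      (fun p q r s h1 h2 => (key a p r).trans ((and_congr h1 h2).trans (key a q s).symm)) with h | h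
    · exfalso
      obtain ⟨p, q, r, hpq, hpr, hqr⟩ := hcard
      exact pigeon (fun e => hpq ((h p q).1 e)) (fun e => hpr ((h p r).1 e))
        (fun e => hqr ((h q r).1 e))
    · intro x
      exact (h z x).1 (hz a)
  intro x y
  have h1 := hI x y x
  have h2 := hI z y x
  rw [hneg] at h1
  rw [hInv] at h2
  rw [h1, ← h2]
  exact (full x y).1
end
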